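/- For every fixed integer ℓ ≥ 3 there exist constants C > 0 and δ > 0 such that for all positive integers n, d with dn even and 2 ≤ d ≤ δn, and any fixed cycle T of length ℓ in the complete graph K_n on [n]: P(T ⊆ 𝒢(n,d)) = ((d−1)/n)^ℓ·(1 − (Σ_{i=1}^{ℓ} φ_i)/(dn) + θ) for some real θ with |θ| ≤ C·d²/n², where φ₁ = −d, φ₂ = −2d, φ_i = −2d − 2(i−3) − 1 for 3 ≤ i ≤ ℓ−1, and φ_ℓ = −3d + 3 − 2(ℓ−3). -/

import Mathlib

noncomputable section

/-- The degree of the vertex `v` in the simple graph `G`. -/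
def deg {n : ℕ} (G : SimpleGraph (Fin n)) (v : Fin n) : ℕ := (G.neighborSet v).ncard

/-- The probability that a graph chosen uniformly at random among all simple graphs on `[n]`
satisfying `base` also satisfies `Q`. -/
def prob {n : ℕ} (base Q : SimpleGraph (Fin n) → Prop) : ℝ :=
  (Nat.card {G : SimpleGraph (Fin n) // base G ∧ Q G} : ℝ) /
    (Nat.card {G : SimpleGraph (Fin n) // base G} : ℝ)

/-- The cycle on the `ℓ` distinct vertices `f 0, f 1, …, f (ℓ-1)` of `[n]`, as a graph
on `[n]`, where consecutive vertices (cyclically) are joined by an edge. -/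
def cycGraph {n ℓ : ℕ} (f : ZMod ℓ ↪ Fin n) : SimpleGraph (Fin n) :=
  SimpleGraph.fromEdgeSet {e | ∃ i : ZMod ℓ, e = s(f i, f (i + 1))}

section Counting

open scoped Classical symmDiff

variable {n d : ℕ}

/-- The adjacency indicator of a graph, as a real number. -/
def adjInd (G : SimpleGraph (Fin n)) (x y : Fin n) : ℝ := if G.Adj x y then 1 else 0

/-- The indicator of membership of the pair `{x, y}` in a set of edges. -/
def edgeInd (E : Finset (Sym2 (Fin n))) (x y : Fin n) : ℝ := if s(x, y) ∈ E then 1 else 0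

/-- The number of vertices joined to `x` by an edge of `E`. -/
def edgeDeg (E : Finset (Sym2 (Fin n))) (x : Fin n) : ℝ := ∑ y, edgeInd E x y

/-- The sum of the degrees in the edge set `E`. -/
def degSum (E : Finset (Sym2 (Fin n))) : ℝ := ∑ x, edgeDeg E x

/-- The `d`-regular graphs that contain all edges of `E`. -/
def regGraphs (d : ℕ) (E : Finset (Sym2 (Fin n))) : Finset (SimpleGraph (Fin n)) :=
  {G | (∀ x, ∑ y, adjInd G x y = d) ∧ ∀ e ∈ E, e ∈ G.edgeSet}

/-- The number of `d`-regular graphs that contain all edges of `E`. -/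
def numReg (d : ℕ) (E : Finset (Sym2 (Fin n))) : ℝ := (regGraphs d E).card

lemma adjInd_nonneg (G : SimpleGraph (Fin n)) (x y : Fin n) : 0 ≤ adjInd G x y := by
  unfold adjInd; split_ifs <;> norm_num

lemma adjInd_le_one (G : SimpleGraph (Fin n)) (x y : Fin n) : adjInd G x y ≤ 1 := by
  unfold adjInd; split_ifs <;> norm_num

lemma adjInd_comm (G : SimpleGraph (Fin n)) (x y : Fin n) : adjInd G x y = adjInd G y x := by
  simp only [adjInd, G.adj_comm]

@[simp] lemma adjInd_self (G : SimpleGraph (Fin n)) (x : Fin n) : adjInd G x x = 0 := by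
  simp [adjInd]

lemma edgeInd_nonneg (E : Finset (Sym2 (Fin n))) (x y : Fin n) : 0 ≤ edgeInd E x y := by
  unfold edgeInd; split_ifs <;> norm_num

lemma edgeInd_comm (E : Finset (Sym2 (Fin n))) (x y : Fin n) :
    edgeInd E x y = edgeInd E y x := by
  simp only [edgeInd, Sym2.eq_swap]

lemma edgeDeg_nonneg (E : Finset (Sym2 (Fin n))) (x : Fin n) : 0 ≤ edgeDeg E x :=
  Finset.sum_nonneg fun _ _ => edgeInd_nonneg _ _ _

lemma degSum_nonneg (E : Finset (Sym2 (Fin n))) : 0 ≤ degSum E :=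
  Finset.sum_nonneg fun _ _ => edgeDeg_nonneg _ _

lemma numReg_nonneg (E : Finset (Sym2 (Fin n))) : 0 ≤ numReg d E := Nat.cast_nonneg _

lemma edgeInd_insert {E : Finset (Sym2 (Fin n))} {u v : Fin n} (huv : u ≠ v) (he : s(u, v) ∉ E)
    (x y : Fin n) : edgeInd (insert s(u, v) E) x y = edgeInd E x y +
      ((if x = u then (if y = v then 1 else 0) else 0) +
        (if x = v then (if y = u then 1 else 0) else 0)) := by
  have he' : s(v, u) ∉ E := by rwa [Sym2.eq_swap]
  unfold edgeInd
  simp only [Finset.mem_insert, Sym2.eq_iff]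
  by_cases h1 : x = u <;> by_cases h2 : y = v <;> by_cases h3 : x = v <;> by_cases h4 : y = u <;>
    simp_all

lemma edgeDeg_insert {E : Finset (Sym2 (Fin n))} {u v : Fin n} (huv : u ≠ v) (he : s(u, v) ∉ E)
    (x : Fin n) : edgeDeg (insert s(u, v) E) x = edgeDeg E x +
      ((if x = u then 1 else 0) + (if x = v then 1 else 0)) := by
  unfold edgeDeg
  simp only [edgeInd_insert huv he, Finset.sum_add_distrib]
  congr 2
  · by_cases h : x = u <;> simp [h]
  · by_cases h : x = v <;> simp [h]

lemma degSum_insert {E : Finset (Sym2 (Fin n))} {u v : Fin n} (huv : u ≠ v) (he : s(u, v) ∉ E) :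
    degSum (insert s(u, v) E) = degSum E + 2 := by
  unfold degSum
  simp only [edgeDeg_insert huv he, Finset.sum_add_distrib]
  simp
  norm_num

lemma sum_adjInd {E : Finset (Sym2 (Fin n))} {G : SimpleGraph (Fin n)} (hG : G ∈ regGraphs d E)
    (x : Fin n) : ∑ y, adjInd G x y = d := by
  simp only [regGraphs, Finset.mem_filter, Finset.mem_univ, true_and] at hG
  exact hG.1 x

lemma edgeInd_le_adjInd {E : Finset (Sym2 (Fin n))} {G : SimpleGraph (Fin n)}
    (hG : G ∈ regGraphs d E) (x y : Fin n) : edgeInd E x y ≤ adjInd G x y := by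
  simp only [regGraphs, Finset.mem_filter, Finset.mem_univ, true_and] at hG
  unfold edgeInd adjInd
  split_ifs with h1 h2
  · rfl
  · exact absurd (hG.2 _ h1) h2
  · norm_num
  · rfl

lemma edgeDeg_le {E : Finset (Sym2 (Fin n))} {G : SimpleGraph (Fin n)}
    (hG : G ∈ regGraphs d E) (x : Fin n) : edgeDeg E x ≤ d := by
  rw [← sum_adjInd hG x]
  exact Finset.sum_le_sum fun y _ => edgeInd_le_adjInd hG x y

lemma mem_regGraphs_insert {E : Finset (Sym2 (Fin n))} {x y : Fin n} {G : SimpleGraph (Fin n)} :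
    G ∈ regGraphs d (insert s(x, y) E) ↔ G ∈ regGraphs d E ∧ G.Adj x y := by
  simp only [regGraphs, Finset.mem_filter, Finset.mem_univ, true_and, Finset.mem_insert,
    forall_eq_or_imp, SimpleGraph.mem_edgeSet]
  tauto

lemma sum_mul_adjInd (E : Finset (Sym2 (Fin n))) (x y : Fin n) (f : SimpleGraph (Fin n) → ℝ) :
    ∑ G ∈ regGraphs d E, f G * adjInd G x y = ∑ G ∈ regGraphs d (insert s(x, y) E), f G := by
  have : regGraphs d (insert s(x, y) E) = (regGraphs d E).filter (fun G => G.Adj x y) := by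
    ext G; simp [mem_regGraphs_insert]
  rw [this, Finset.sum_filter]
  refine Finset.sum_congr rfl fun G _ => ?_
  simp [adjInd]

lemma sum_adjInd_eq_numReg (E : Finset (Sym2 (Fin n))) (x y : Fin n) :
    ∑ G ∈ regGraphs d E, adjInd G x y = numReg d (insert s(x, y) E) := by
  have := sum_mul_adjInd (d := d) E x y (fun _ => 1)
  simpa [numReg] using this

lemma numReg_insert_le (E : Finset (Sym2 (Fin n))) (x y : Fin n) :
    numReg d (insert s(x, y) E) ≤ numReg d E := by
  unfold numReg
  exact_mod_cast Finset.card_le_card fun G hG => (mem_regGraphs_insert.1 hG).1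

lemma sum_numReg_insert (E : Finset (Sym2 (Fin n))) (x : Fin n) :
    ∑ y, numReg d (insert s(x, y) E) = d * numReg d E := by
  simp only [← sum_adjInd_eq_numReg]
  rw [Finset.sum_comm, Finset.sum_congr rfl fun G hG => sum_adjInd hG x]
  simp [numReg, mul_comm]

lemma numReg_diag (E : Finset (Sym2 (Fin n))) (x : Fin n) :
    numReg d (insert s(x, x) E) = 0 := by
  rw [← sum_adjInd_eq_numReg]; simp

/-- The four-cycle with edges `uv`, `vy`, `yx`, `xu`. The symmetric difference with it exchanges
the pair of edges `uv`, `xy` for the pair `ux`, `vy`. -/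
def fourCycle (u v x y : Fin n) : SimpleGraph (Fin n) :=
  SimpleGraph.fromEdgeSet {s(u, v), s(x, y), s(u, x), s(v, y)}

lemma sum_adjInd_symmDiff {G : SimpleGraph (Fin n)} {u v x y : Fin n} (huv : u ≠ v) (hxy : x ≠ y)
    (hux : u ≠ x) (hvy : v ≠ y) (hvx : v ≠ x) (huy : u ≠ y)
    (h1 : G.Adj u v ↔ ¬ G.Adj u x) (h2 : G.Adj u v ↔ G.Adj x y) (h3 : G.Adj u x ↔ G.Adj v y)
    (w : Fin n) :
    ∑ z, adjInd (G ∆ fourCycle u v x y) w z = ∑ z, adjInd G w z := by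
  have k2 : G.Adj v u ↔ ¬ G.Adj v y := by rw [G.adj_comm v u, h1, h3]
  have k3 : G.Adj x y ↔ ¬ G.Adj x u := by rw [← h2, h1, G.adj_comm x u]
  have k4 : G.Adj y x ↔ ¬ G.Adj y v := by rw [G.adj_comm y x, G.adj_comm y v, ← h2, ← h3, h1]
  have key : ∀ a p q : Fin n, (G.Adj a p ↔ ¬ G.Adj a q) →
      (∀ z, (fourCycle u v x y).Adj a z ↔ z = p ∨ z = q) →
      ∑ z, adjInd (G ∆ fourCycle u v x y) a z = ∑ z, adjInd G a z := by
    intro a p q hG hz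
    refine Fintype.sum_equiv (Equiv.swap p q) _ _ fun z => ?_
    have : (G ∆ fourCycle u v x y).Adj a z ↔ G.Adj a (Equiv.swap p q z) := by
      have e : (G ∆ fourCycle u v x y).Adj a z ↔
          (G.Adj a z ∧ ¬ (z = p ∨ z = q)) ∨ ((z = p ∨ z = q) ∧ ¬ G.Adj a z) := by
        rw [symmDiff, SimpleGraph.sup_adj, SimpleGraph.sdiff_adj, SimpleGraph.sdiff_adj, hz]
      rw [e]
      by_cases hp : z = p
      · subst hp; rw [Equiv.swap_apply_left]; simp [hG]
      · by_cases hq : z = q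
        · subst hq; rw [Equiv.swap_apply_right]; simp [hG]
        · rw [Equiv.swap_apply_of_ne_of_ne hp hq]; simp [hp, hq]
    simp only [adjInd, this]
  have hF : ∀ a z, (fourCycle u v x y).Adj a z ↔
      (s(a, z) = s(u, v) ∨ s(a, z) = s(x, y) ∨ s(a, z) = s(u, x) ∨ s(a, z) = s(v, y)) ∧ a ≠ z := by
    intro a z; simp [fourCycle]
  by_cases hwu : w = u
  · subst hwu
    refine key w v x h1 fun z => ?_
    rw [hF]; simp only [Sym2.eq_iff]; grind
  by_cases hwv : w = v
  · subst hwv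
    refine key w u y k2 fun z => ?_
    rw [hF]; simp only [Sym2.eq_iff]; grind
  by_cases hwx : w = x
  · subst hwx
    refine key w y u k3 fun z => ?_
    rw [hF]; simp only [Sym2.eq_iff]; grind
  by_cases hwy : w = y
  · subst hwy
    refine key w x v k4 fun z => ?_
    rw [hF]; simp only [Sym2.eq_iff]; grind
  refine Finset.sum_congr rfl fun z _ => ?_
  have : ¬ (fourCycle u v x y).Adj w z := by
    rw [hF]; simp only [Sym2.eq_iff]; grind
  simp only [adjInd, symmDiff, SimpleGraph.sup_adj, SimpleGraph.sdiff_adj]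
  simp [this]

lemma card_switch {E : Finset (Sym2 (Fin n))} {u v x y : Fin n} (huv : u ≠ v) (hxy : x ≠ y)
    (hux : u ≠ x) (hvy : v ≠ y) (hvx : v ≠ x) (huy : u ≠ y) (e1 : s(u, v) ∉ E) (e2 : s(x, y) ∉ E)
    (e3 : s(u, x) ∉ E) (e4 : s(v, y) ∉ E) :
    ((regGraphs d E).filter fun G => G.Adj u v ∧ G.Adj x y ∧ ¬ G.Adj u x ∧ ¬ G.Adj v y).card =
    ((regGraphs d E).filter fun G => ¬ G.Adj u v ∧ ¬ G.Adj x y ∧ G.Adj u x ∧ G.Adj v y).card := by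
  have hF : ∀ a z, (fourCycle u v x y).Adj a z ↔
      (s(a, z) = s(u, v) ∨ s(a, z) = s(x, y) ∨ s(a, z) = s(u, x) ∨ s(a, z) = s(v, y)) ∧ a ≠ z := by
    intro a z; simp [fourCycle]
  have hmem : ∀ G ∈ regGraphs d E, (G.Adj u v ↔ ¬ G.Adj u x) → (G.Adj u v ↔ G.Adj x y) →
      (G.Adj u x ↔ G.Adj v y) → G ∆ fourCycle u v x y ∈ regGraphs d E := by
    intro G hG h1 h2 h3
    simp only [regGraphs, Finset.mem_filter, Finset.mem_univ, true_and] at hG ⊢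
    refine ⟨fun w => ?_, fun e he => ?_⟩
    · rw [sum_adjInd_symmDiff huv hxy hux hvy hvx huy h1 h2 h3]; exact hG.1 w
    · have := hG.2 e he
      induction e using Sym2.ind with
      | _ a b =>
        simp only [SimpleGraph.mem_edgeSet, symmDiff, SimpleGraph.sup_adj,
          SimpleGraph.sdiff_adj] at this ⊢
        refine Or.inl ⟨this, ?_⟩
        rw [hF]
        rintro ⟨h | h | h | h, -⟩ <;> rw [h] at he <;> contradiction
  have hadj : ∀ (G : SimpleGraph (Fin n)) (a b : Fin n), (fourCycle u v x y).Adj a b →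
      ((G ∆ fourCycle u v x y).Adj a b ↔ ¬ G.Adj a b) := by
    intro G a b h
    simp [symmDiff, h]
  have f1 : (fourCycle u v x y).Adj u v := by simp [hF, huv]
  have f2 : (fourCycle u v x y).Adj x y := by simp [hF, hxy]
  have f3 : (fourCycle u v x y).Adj u x := by simp [hF, hux]
  have f4 : (fourCycle u v x y).Adj v y := by simp [hF, hvy]
  refine Finset.card_nbij' (fun G => G ∆ fourCycle u v x y) (fun G => G ∆ fourCycle u v x y)
    ?_ ?_ ?_ ?_
  · intro G hG
    simp only [Finset.coe_filter, Set.mem_ofPred_eq, hadj G _ _ f1, hadj G _ _ f2, hadj G _ _ f3,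
      hadj G _ _ f4] at hG ⊢
    exact ⟨hmem G hG.1 (by tauto) (by tauto) (by tauto), by tauto⟩
  · intro G hG
    simp only [Finset.coe_filter, Set.mem_ofPred_eq, hadj G _ _ f1, hadj G _ _ f2, hadj G _ _ f3,
      hadj G _ _ f4] at hG ⊢
    exact ⟨hmem G hG.1 (by tauto) (by tauto) (by tauto), by tauto⟩
  · intro G _; exact symmDiff_symmDiff_cancel_right _ _
  · intro G _; exact symmDiff_symmDiff_cancel_right _ _

/-- The number of ways to switch the edge `uv` out of the graph `G`. -/
def forwardSwitches (E : Finset (Sym2 (Fin n))) (u v : Fin n) (G : SimpleGraph (Fin n)) : ℝ :=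
  ∑ x, ∑ y, (adjInd G x y - edgeInd E x y) * (1 - ((if x = u then 1 else 0) + adjInd G u x)) *
    (1 - ((if y = v then 1 else 0) + adjInd G v y))

/-- The number of ways to switch the edge `uv` into the graph `G`. -/
def backwardSwitches (E : Finset (Sym2 (Fin n))) (u v : Fin n) (G : SimpleGraph (Fin n)) : ℝ :=
  ∑ x, ∑ y, (adjInd G u x - edgeInd E u x) * (adjInd G v y - edgeInd E v y) *
    ((if x = y then 0 else 1) * (1 - adjInd G x y))

lemma sum_forwardSwitches {E : Finset (Sym2 (Fin n))} {u v : Fin n} (huv : u ≠ v)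
    (he : s(u, v) ∉ E) :
    ∑ G ∈ regGraphs d (insert s(u, v) E), forwardSwitches E u v G =
      ∑ G ∈ regGraphs d E, (1 - adjInd G u v) * backwardSwitches E u v G := by
  rw [← sum_mul_adjInd]
  unfold forwardSwitches backwardSwitches
  simp only [Finset.sum_mul, Finset.mul_sum]
  rw [Finset.sum_comm]
  conv_rhs => rw [Finset.sum_comm]
  refine Finset.sum_congr rfl fun x _ => ?_
  rw [Finset.sum_comm]
  conv_rhs => rw [Finset.sum_comm]
  refine Finset.sum_congr rfl fun y _ => ?_
  have hE : ∀ G ∈ regGraphs d E, ∀ a b, s(a, b) ∈ E → G.Adj a b := by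
    intro G hG a b h
    simp only [regGraphs, Finset.mem_filter, Finset.mem_univ, true_and] at hG
    exact hG.2 _ h
  by_cases hgood : x ≠ y ∧ u ≠ x ∧ v ≠ y ∧ v ≠ x ∧ u ≠ y ∧ s(x, y) ∉ E ∧ s(u, x) ∉ E ∧
      s(v, y) ∉ E
  · obtain ⟨hxy, hux, hvy, hvx, huy, e2, e3, e4⟩ := hgood
    have := card_switch (d := d) huv hxy hux hvy hvx huy he e2 e3 e4
    have h2 : (((regGraphs d E).filter fun G => G.Adj u v ∧ G.Adj x y ∧ ¬ G.Adj u x ∧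
        ¬ G.Adj v y).card : ℝ) = ((regGraphs d E).filter fun G => ¬ G.Adj u v ∧ ¬ G.Adj x y ∧
        G.Adj u x ∧ G.Adj v y).card := by exact_mod_cast this
    rw [← Finset.sum_boole, ← Finset.sum_boole] at h2
    convert h2 using 2 with G hG G hG
    · simp only [adjInd, edgeInd, e2, hux.symm, hvy.symm, if_false]
      by_cases a1 : G.Adj u v <;> by_cases a2 : G.Adj x y <;> by_cases a3 : G.Adj u x <;>
        by_cases a4 : G.Adj v y <;> simp [a1, a2, a3, a4]
    · simp only [adjInd, edgeInd, e3, e4, hxy, if_false]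
      by_cases a1 : G.Adj u v <;> by_cases a2 : G.Adj x y <;> by_cases a3 : G.Adj u x <;>
        by_cases a4 : G.Adj v y <;> simp [a1, a2, a3, a4]
  · rw [Finset.sum_eq_zero, Finset.sum_eq_zero]
    · intro G hG
      have g1 := hE G hG x y
      have g2 := hE G hG u x
      have g3 := hE G hG v y
      have g4 := G.adj_comm u v
      have g5 : s(v, u) ∉ E := by rwa [Sym2.eq_swap]
      simp only [adjInd, edgeInd]
      by_cases g6 : G.Adj u v
      all_goals
        by_contra hne
        apply hgood
        refine ⟨?_, ?_, ?_, ?_, ?_, ?_, ?_, ?_⟩ <;> intro hc <;> apply hne <;> simp_all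
    · intro G hG
      have g1 := hE G hG x y
      have g2 := hE G hG u x
      have g3 := hE G hG v y
      have g4 := G.adj_comm u v
      have g5 : s(v, u) ∉ E := by rwa [Sym2.eq_swap]
      simp only [adjInd, edgeInd]
      by_cases g6 : G.Adj u v
      all_goals
        by_contra hne
        apply hgood
        refine ⟨?_, ?_, ?_, ?_, ?_, ?_, ?_, ?_⟩ <;> intro hc <;> apply hne <;> simp_all

lemma degSum_insert_le (E : Finset (Sym2 (Fin n))) (u v : Fin n) :
    degSum (insert s(u, v) E) ≤ degSum E + 2 := by
  rcases eq_or_ne u v with rfl | huv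
  · have h : ∀ x y, edgeInd (insert s(u, u) E) x y ≤ edgeInd E x y +
        (if x = u then (if y = u then 1 else 0) else 0) := by
      intro x y
      unfold edgeInd
      simp only [Finset.mem_insert, Sym2.eq_iff]
      split_ifs <;> norm_num
      all_goals tauto
    have h2 : degSum (insert s(u, u) E) ≤ ∑ x, ∑ y, (edgeInd E x y +
        (if x = u then (if y = u then 1 else 0) else 0)) :=
      Finset.sum_le_sum fun x _ => Finset.sum_le_sum fun y _ => h x y
    have h3 : ∑ x, ∑ y, (edgeInd E x y + (if x = u then (if y = u then (1 : ℝ) else 0) else 0))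
        = degSum E + 1 := by
      simp only [Finset.sum_add_distrib, degSum, edgeDeg]
      congr 1
      rw [Finset.sum_eq_single u] <;> simp +contextual
    linarith
  · by_cases he : s(u, v) ∈ E
    · rw [Finset.insert_eq_of_mem he]; linarith
    · exact (degSum_insert huv he).le

/-- Forcing one more edge lowers the number of regular graphs by a factor of `p` at least, as long
as the edge set is small. -/
def EdgeBound (n d : ℕ) (K p : ℝ) : Prop :=
  ∀ (E : Finset (Sym2 (Fin n))) (x y : Fin n), degSum E ≤ K → s(x, y) ∉ E →
    numReg d (insert s(x, y) E) ≤ p * numReg d E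

lemma sum_sub_edgeInd_le {K p : ℝ} (hp : EdgeBound n d K p) (hp0 : 0 ≤ p)
    (E F : Finset (Sym2 (Fin n))) (hD : degSum E ≤ K) (x y : Fin n)
    (h : s(x, y) ∈ E → s(x, y) ∈ F) :
    ∑ G ∈ regGraphs d E, (adjInd G x y - edgeInd F x y) ≤ p * numReg d E := by
  by_cases hE : s(x, y) ∈ E
  · have hF := h hE
    refine le_trans (Finset.sum_nonpos fun G _ => ?_) (mul_nonneg hp0 (numReg_nonneg E))
    have := adjInd_le_one G x y
    simp only [edgeInd, hF, if_true]; linarith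
  · refine le_trans (Finset.sum_le_sum fun G _ => ?_) ((sum_adjInd_eq_numReg E x y).le.trans
      (hp E x y hD hE))
    have := edgeInd_nonneg F x y
    linarith

lemma regGraphs_insert_subset (E : Finset (Sym2 (Fin n))) (x y : Fin n) :
    regGraphs d (insert s(x, y) E) ⊆ regGraphs d E := fun _ hG => (mem_regGraphs_insert.1 hG).1

lemma sum_mul_adjInd_le {K p : ℝ} (hp : EdgeBound n d K p) (hp0 : 0 ≤ p)
    (E F : Finset (Sym2 (Fin n))) (hD : degSum E + 2 ≤ K) (x y z w : Fin n)
    (h : z ≠ w → s(x, y) ∈ insert s(z, w) E → s(x, y) ∈ F) :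
    ∑ G ∈ regGraphs d E, (adjInd G x y - edgeInd F x y) * adjInd G z w ≤
      p * numReg d (insert s(z, w) E) := by
  rcases eq_or_ne z w with rfl | hzw
  · simp [numReg_diag]
  · rw [sum_mul_adjInd]
    exact sum_sub_edgeInd_le hp hp0 _ _ ((degSum_insert_le E z w).trans hD) _ _ (h hzw)

lemma sum_mul_adjInd_mul_adjInd_le {K p : ℝ} (hp : EdgeBound n d K p) (hp0 : 0 ≤ p)
    (E F : Finset (Sym2 (Fin n))) (hD : degSum E + 4 ≤ K) (x y z w z' w' : Fin n)
    (h : z ≠ w → z' ≠ w' → s(x, y) ∈ insert s(z', w') (insert s(z, w) E) → s(x, y) ∈ F) :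
    ∑ G ∈ regGraphs d E, (adjInd G x y - edgeInd F x y) * adjInd G z' w' * adjInd G z w ≤
      p * numReg d (insert s(z', w') (insert s(z, w) E)) := by
  rcases eq_or_ne z w with rfl | hzw
  · rw [Finset.sum_eq_zero]
    · exact mul_nonneg hp0 (numReg_nonneg _)
    · simp
  · rw [sum_mul_adjInd]
    have := degSum_insert_le E z w
    exact sum_mul_adjInd_le hp hp0 _ _ (by linarith) _ _ _ _ (h hzw)

lemma adjInd_mul_self (G : SimpleGraph (Fin n)) (x y : Fin n) :
    adjInd G x y * adjInd G x y = adjInd G x y := by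
  unfold adjInd; split_ifs <;> norm_num

lemma edgeInd_mul_adjInd {E : Finset (Sym2 (Fin n))} {G : SimpleGraph (Fin n)}
    (hG : G ∈ regGraphs d E) (x y : Fin n) : edgeInd E x y * adjInd G x y = edgeInd E x y := by
  have h := edgeInd_le_adjInd hG x y
  unfold edgeInd adjInd at *
  split_ifs at * <;> norm_num at *

lemma sum_sub_edgeInd {E : Finset (Sym2 (Fin n))} {G : SimpleGraph (Fin n)}
    (hG : G ∈ regGraphs d E) (x : Fin n) :
    ∑ y, (adjInd G x y - edgeInd E x y) = d - edgeDeg E x := by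
  rw [Finset.sum_sub_distrib, sum_adjInd hG]; rfl

lemma sum_sub_edgeInd_left {E : Finset (Sym2 (Fin n))} {G : SimpleGraph (Fin n)}
    (hG : G ∈ regGraphs d E) (y : Fin n) :
    ∑ x, (adjInd G x y - edgeInd E x y) = d - edgeDeg E y := by
  rw [← sum_sub_edgeInd hG y]
  exact Finset.sum_congr rfl fun x _ => by rw [adjInd_comm, edgeInd_comm]

lemma closed_nbhd_mem {G : SimpleGraph (Fin n)} (u x : Fin n) :
    0 ≤ ((if x = u then 1 else 0) + adjInd G u x : ℝ) ∧
      ((if x = u then 1 else 0) + adjInd G u x : ℝ) ≤ 1 := by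
  split_ifs with h
  · subst h; simp
  · simp [adjInd_nonneg, adjInd_le_one]

lemma forwardSwitches_le {E : Finset (Sym2 (Fin n))} {u v : Fin n} {G : SimpleGraph (Fin n)}
    (hG : G ∈ regGraphs d E) : forwardSwitches E u v G ≤ d * n := by
  have h1 : ∑ x : Fin n, ∑ y, adjInd G x y = d * n := by
    rw [Finset.sum_congr rfl fun x _ => sum_adjInd hG x]; simp [mul_comm]
  rw [← h1]
  refine Finset.sum_le_sum fun x _ => Finset.sum_le_sum fun y _ => ?_
  have h2 := closed_nbhd_mem (G := G) u x
  have h3 := closed_nbhd_mem (G := G) v y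
  have h4 := edgeInd_le_adjInd hG x y
  have h5 := edgeInd_nonneg E x y
  set m := ((if x = u then 1 else 0) + adjInd G u x : ℝ)
  set m' := ((if y = v then 1 else 0) + adjInd G v y : ℝ)
  have h6 : (adjInd G x y - edgeInd E x y) * (1 - m) ≤ adjInd G x y - edgeInd E x y := by
    nlinarith
  have h7 : 0 ≤ (adjInd G x y - edgeInd E x y) * (1 - m) :=
    mul_nonneg (by linarith) (by linarith)
  nlinarith

lemma sum_closed_nbhd (G : SimpleGraph (Fin n)) (u : Fin n) (f : Fin n → ℝ) :
    ∑ x, ((if x = u then 1 else 0) + adjInd G u x : ℝ) * f x =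
      f u + ∑ x, adjInd G u x * f x := by
  simp [add_mul, Finset.sum_add_distrib]

lemma forwardSwitches_eq {E : Finset (Sym2 (Fin n))} {u v : Fin n} {G : SimpleGraph (Fin n)}
    (hG : G ∈ regGraphs d E) :
    forwardSwitches E u v G = d * n - degSum E
      - (d - edgeDeg E u + (d ^ 2 - ∑ x, adjInd G u x * edgeDeg E x))
      - (d - edgeDeg E v + (d ^ 2 - ∑ x, adjInd G v x * edgeDeg E x))
      + ∑ x, ∑ y, (adjInd G x y - edgeInd E x y) * ((if x = u then 1 else 0) + adjInd G u x) *
        ((if y = v then 1 else 0) + adjInd G v y) := by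
  have t1 : ∑ x, ∑ y, (adjInd G x y - edgeInd E x y) = d * n - degSum E := by
    simp only [sum_sub_edgeInd hG, Finset.sum_sub_distrib, degSum]
    simp [mul_comm]
  have t2 : ∀ u, ∑ x, ((if x = u then 1 else 0) + adjInd G u x) * (d - edgeDeg E x) =
      d - edgeDeg E u + (d ^ 2 - ∑ x, adjInd G u x * edgeDeg E x) := by
    intro u
    rw [sum_closed_nbhd]
    simp only [mul_sub, Finset.sum_sub_distrib, ← Finset.sum_mul, sum_adjInd hG]
    ring
  have t3 : ∑ x, ∑ y, (adjInd G x y - edgeInd E x y) *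
      ((if x = u then 1 else 0) + adjInd G u x) =
      d - edgeDeg E u + (d ^ 2 - ∑ x, adjInd G u x * edgeDeg E x) := by
    rw [← t2 u]
    refine Finset.sum_congr rfl fun x _ => ?_
    rw [← Finset.sum_mul, sum_sub_edgeInd hG, mul_comm]
  have t4 : ∑ x, ∑ y, (adjInd G x y - edgeInd E x y) *
      ((if y = v then 1 else 0) + adjInd G v y) =
      d - edgeDeg E v + (d ^ 2 - ∑ x, adjInd G v x * edgeDeg E x) := by
    rw [← t2 v, Finset.sum_comm]
    refine Finset.sum_congr rfl fun y _ => ?_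
    rw [← Finset.sum_mul, sum_sub_edgeInd_left hG, mul_comm]
  rw [← t1, ← t3, ← t4]
  unfold forwardSwitches
  simp only [← Finset.sum_sub_distrib, ← Finset.sum_add_distrib]
  refine Finset.sum_congr rfl fun x _ => Finset.sum_congr rfl fun y _ => ?_
  ring

lemma le_forwardSwitches {E : Finset (Sym2 (Fin n))} {u v : Fin n} {G : SimpleGraph (Fin n)}
    (hG : G ∈ regGraphs d E) :
    d * n - degSum E - 2 * d - 2 * d ^ 2 ≤ forwardSwitches E u v G := by
  rw [forwardSwitches_eq hG]
  have h1 : 0 ≤ ∑ x, ∑ y, (adjInd G x y - edgeInd E x y) *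
      ((if x = u then 1 else 0) + adjInd G u x) * ((if y = v then 1 else 0) + adjInd G v y) :=
    Finset.sum_nonneg fun x _ => Finset.sum_nonneg fun y _ => mul_nonneg (mul_nonneg
      (sub_nonneg.2 (edgeInd_le_adjInd hG x y)) (closed_nbhd_mem u x).1) (closed_nbhd_mem v y).1
  have h2 : ∀ u, 0 ≤ ∑ x, adjInd G u x * edgeDeg E x := fun u =>
    Finset.sum_nonneg fun x _ => mul_nonneg (adjInd_nonneg _ _ _) (edgeDeg_nonneg _ _)
  linarith [h2 u, h2 v, edgeDeg_nonneg E u, edgeDeg_nonneg E v]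

/-- The number of pairs of a neighbour of `u` and a neighbour of `v` that coincide or are
adjacent. -/
def closePairs (E : Finset (Sym2 (Fin n))) (u v : Fin n) (G : SimpleGraph (Fin n)) : ℝ :=
  ∑ x, (adjInd G u x - edgeInd E u x) * (adjInd G v x - edgeInd E v x) +
  ∑ x, ∑ y, (if x = v ∨ y = u then 0 else 1) *
    ((adjInd G u x - edgeInd E u x) * (adjInd G v y - edgeInd E v y) * adjInd G x y)

lemma closePairs_nonneg {E : Finset (Sym2 (Fin n))} {u v : Fin n} {G : SimpleGraph (Fin n)}
    (hG : G ∈ regGraphs d E) : 0 ≤ closePairs E u v G := by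
  have h : ∀ x y, 0 ≤ adjInd G x y - edgeInd E x y := fun x y =>
    sub_nonneg.2 (edgeInd_le_adjInd hG x y)
  refine add_nonneg (Finset.sum_nonneg fun x _ => mul_nonneg (h _ _) (h _ _))
    (Finset.sum_nonneg fun x _ => Finset.sum_nonneg fun y _ => mul_nonneg ?_
      (mul_nonneg (mul_nonneg (h _ _) (h _ _)) (adjInd_nonneg _ _ _)))
  split_ifs <;> norm_num

lemma backwardSwitches_eq {E : Finset (Sym2 (Fin n))} {u v : Fin n} {G : SimpleGraph (Fin n)}
    (hG : G ∈ regGraphs d E) :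
    (1 - adjInd G u v) * backwardSwitches E u v G =
      (1 - adjInd G u v) * ((d - edgeDeg E u) * (d - edgeDeg E v) - closePairs E u v G) := by
  by_cases huv : adjInd G u v = 1
  · rw [huv]; ring
  have huv' : adjInd G u v = 0 := by
    unfold adjInd at *; split_ifs at * <;> simp_all
  congr 1
  rw [← sum_sub_edgeInd hG u, ← sum_sub_edgeInd hG v, Finset.sum_mul_sum]
  unfold backwardSwitches closePairs
  have e0 : edgeInd E u v = 0 :=
    le_antisymm (by rw [← huv']; exact edgeInd_le_adjInd hG u v) (edgeInd_nonneg _ _ _)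
  have e1 : ∑ x, (adjInd G u x - edgeInd E u x) * (adjInd G v x - edgeInd E v x) =
      ∑ x, ∑ y, if x = y then (adjInd G u x - edgeInd E u x) * (adjInd G v y - edgeInd E v y)
        else 0 := by
    simp
  rw [e1]
  simp only [← Finset.sum_sub_distrib, ← Finset.sum_add_distrib]
  refine Finset.sum_congr rfl fun x _ => Finset.sum_congr rfl fun y _ => ?_
  by_cases hx : x = v
  · subst hx; simp [huv', e0]
  by_cases hy : y = u
  · subst hy
    have e3 : adjInd G v y = 0 := by rw [adjInd_comm, huv']
    have e4 : edgeInd E v y = 0 := by rw [edgeInd_comm, e0]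
    simp [e3, e4]
  by_cases hxy : x = y
  · subst hxy; simp
  · simp [hx, hy, hxy]; ring

lemma backwardSwitches_le {E : Finset (Sym2 (Fin n))} {u v : Fin n} {G : SimpleGraph (Fin n)}
    (hG : G ∈ regGraphs d E) : (1 - adjInd G u v) * backwardSwitches E u v G ≤ d ^ 2 := by
  rw [backwardSwitches_eq hG]
  have h1 := closePairs_nonneg (u := u) (v := v) hG
  have h2 := edgeDeg_le hG u
  have h3 := edgeDeg_le hG v
  have h4 := edgeDeg_nonneg E u
  have h5 := edgeDeg_nonneg E v
  have h6 := adjInd_nonneg G u v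
  have h7 := adjInd_le_one G u v
  have h8 : ((d : ℝ) - edgeDeg E u) * (d - edgeDeg E v) ≤ d * d :=
    mul_le_mul (by linarith) (by linarith) (by linarith) (by linarith)
  have h9 : 0 ≤ ((d : ℝ) - edgeDeg E u) * (d - edgeDeg E v) :=
    mul_nonneg (by linarith) (by linarith)
  nlinarith

lemma edgeBound_of_le {K : ℝ} (hd : 2 ≤ d) (hK : 0 ≤ K) (hn : (2 * K + 6) * d ≤ n) :
    EdgeBound n d K (2 * d / n) := by
  intro E x y hD hE
  have hd' : (2 : ℝ) ≤ d := by exact_mod_cast hd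
  have hn0 : (0 : ℝ) < n := by nlinarith
  rcases eq_or_ne x y with rfl | hxy
  · rw [numReg_diag]
    exact mul_nonneg (by positivity) (numReg_nonneg _)
  have key := sum_forwardSwitches (d := d) hxy hE
  have h1 : (d * n - degSum E - 2 * d - 2 * d ^ 2) * numReg d (insert s(x, y) E) ≤
      ∑ G ∈ regGraphs d (insert s(x, y) E), forwardSwitches E x y G := by
    refine le_trans (le_of_eq ?_) (Finset.card_nsmul_le_sum _ _ _ fun G hG =>
      le_forwardSwitches (regGraphs_insert_subset E x y hG))
    rw [nsmul_eq_mul, numReg, mul_comm]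
  have h2 : ∑ G ∈ regGraphs d E, (1 - adjInd G x y) * backwardSwitches E x y G ≤
      d ^ 2 * numReg d E := by
    refine (Finset.sum_le_card_nsmul _ _ _ fun G hG => backwardSwitches_le hG).trans
      (le_of_eq ?_)
    rw [nsmul_eq_mul, numReg, mul_comm]
  have h3 : (d * n / 2 : ℝ) ≤ d * n - degSum E - 2 * d - 2 * d ^ 2 := by
    nlinarith [mul_le_mul_of_nonneg_left hn (show (0 : ℝ) ≤ d by linarith),
      mul_nonneg hK (show (0 : ℝ) ≤ d * d - 1 by nlinarith)]
  have h4 : (d * n / 2 : ℝ) * numReg d (insert s(x, y) E) ≤ d ^ 2 * numReg d E := by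
    nlinarith [numReg_nonneg (d := d) (insert s(x, y) E)]
  rw [div_mul_eq_mul_div, le_div_iff₀ hn0]
  have : d * (numReg d (insert s(x, y) E) * n) ≤ d * (2 * d * numReg d E) := by nlinarith
  exact le_of_mul_le_mul_left this (by linarith)

lemma regGraphs_anti {E F : Finset (Sym2 (Fin n))} (h : E ⊆ F) :
    regGraphs d F ⊆ regGraphs d E := by
  intro G hG
  simp only [regGraphs, Finset.mem_filter, Finset.mem_univ, true_and] at hG ⊢
  exact ⟨hG.1, fun e he => hG.2 e (h he)⟩

lemma sum_closePairs_le {K p : ℝ} (hp : EdgeBound n d K p) (hp0 : 0 ≤ p)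
    {E F : Finset (Sym2 (Fin n))} {u v : Fin n} (huv : u ≠ v) (hEF : E ⊆ F)
    (hFE : ∀ e ∈ F, e ∈ E ∨ e = s(u, v)) (hD : degSum F + 4 ≤ K) :
    ∑ G ∈ regGraphs d F, closePairs E u v G ≤ (p * d + p * d ^ 2) * numReg d F := by
  have hle : ∀ G ∈ regGraphs d F, ∀ x y, 0 ≤ adjInd G x y - edgeInd E x y ∧
      adjInd G x y - edgeInd E x y ≤ adjInd G x y := fun G hG x y =>
    ⟨sub_nonneg.2 (edgeInd_le_adjInd (regGraphs_anti hEF hG) x y), by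
      linarith [edgeInd_nonneg E x y]⟩
  unfold closePairs
  rw [Finset.sum_add_distrib, add_mul]
  refine add_le_add ?_ ?_
  · rw [Finset.sum_comm, mul_assoc, ← sum_numReg_insert F u, Finset.mul_sum]
    refine Finset.sum_le_sum fun x _ => ?_
    refine le_trans (Finset.sum_le_sum fun G hG => ?_)
      (sum_mul_adjInd_le hp hp0 F E (by linarith) v x u x fun hux h => ?_)
    · rw [mul_comm]
      exact mul_le_mul_of_nonneg_left (hle G hG _ _).2 (hle G hG _ _).1
    · rcases Finset.mem_insert.1 h with h | h
      · rw [Sym2.eq_iff] at h; grind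
      · rcases hFE _ h with h | h
        · exact h
        · rw [Sym2.eq_iff] at h; grind
  · rw [Finset.sum_comm]
    have e : p * (d : ℝ) ^ 2 * numReg d F =
        ∑ x, ∑ y, p * numReg d (insert s(x, y) (insert s(u, x) F)) := by
      simp only [← Finset.mul_sum, sum_numReg_insert]
      ring
    rw [e]
    refine Finset.sum_le_sum fun x _ => ?_
    rw [Finset.sum_comm]
    refine Finset.sum_le_sum fun y _ => ?_
    by_cases hxy : x = v ∨ y = u
    · simp only [hxy, if_true, zero_mul, Finset.sum_const_zero]
      exact mul_nonneg hp0 (numReg_nonneg _)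
    · refine le_trans (Finset.sum_le_sum fun G hG => ?_)
        (sum_mul_adjInd_mul_adjInd_le hp hp0 F E (by linarith) v y u x x y fun hux hxy' h => ?_)
      · simp only [hxy, if_false, one_mul]
        have h1 := hle G hG u x
        have h2 := hle G hG v y
        have h3 := adjInd_nonneg G x y
        calc _ = (adjInd G v y - edgeInd E v y) * adjInd G x y *
              (adjInd G u x - edgeInd E u x) := by ring
          _ ≤ _ := mul_le_mul_of_nonneg_left h1.2 (mul_nonneg h2.1 h3)
      · rcases Finset.mem_insert.1 h with h | h
        · rw [Sym2.eq_iff] at h; grind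
        rcases Finset.mem_insert.1 h with h | h
        · rw [Sym2.eq_iff] at h; grind
        rcases hFE _ h with h | h
        · exact h
        · rw [Sym2.eq_iff] at h; grind

lemma sum_forwardSwitches_eq {E : Finset (Sym2 (Fin n))} {u v : Fin n} (huv : u ≠ v)
    (he : s(u, v) ∉ E) :
    ∑ G ∈ regGraphs d (insert s(u, v) E), forwardSwitches E u v G =
      (d - edgeDeg E u) * (d - edgeDeg E v) * (numReg d E - numReg d (insert s(u, v) E))
      - ∑ G ∈ regGraphs d E, closePairs E u v G
      + ∑ G ∈ regGraphs d (insert s(u, v) E), closePairs E u v G := by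
  rw [sum_forwardSwitches huv he, Finset.sum_congr rfl fun G hG => backwardSwitches_eq hG,
    ← sum_adjInd_eq_numReg E u v, ← sum_mul_adjInd E u v]
  have : numReg d E = ∑ G ∈ regGraphs d E, (1 : ℝ) := by simp [numReg]
  rw [this, ← Finset.sum_sub_distrib, Finset.mul_sum, ← Finset.sum_sub_distrib,
    ← Finset.sum_add_distrib]
  exact Finset.sum_congr rfl fun G _ => by ring

lemma sum_closePairs_nonneg {E F : Finset (Sym2 (Fin n))} (u v : Fin n) (hEF : E ⊆ F) :
    0 ≤ ∑ G ∈ regGraphs d F, closePairs E u v G :=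
  Finset.sum_nonneg fun _ hG => closePairs_nonneg (regGraphs_anti hEF hG)

lemma edgeDeg_le_of_numReg_ne_zero {E : Finset (Sym2 (Fin n))} (hE : numReg d E ≠ 0)
    (x : Fin n) : edgeDeg E x ≤ d := by
  have : (regGraphs d E).Nonempty := by
    rw [Finset.nonempty_iff_ne_empty]
    rintro h
    exact hE (by simp [numReg, h])
  obtain ⟨G, hG⟩ := this
  exact edgeDeg_le hG x

lemma sub_edgeDeg_mul_mem {E : Finset (Sym2 (Fin n))} {u v : Fin n} (hu : edgeDeg E u ≤ d)
    (hv : edgeDeg E v ≤ d) : 0 ≤ (d - edgeDeg E u : ℝ) * (d - edgeDeg E v) ∧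
      (d - edgeDeg E u : ℝ) * (d - edgeDeg E v) ≤ d ^ 2 := by
  have h4 := edgeDeg_nonneg E u
  have h5 := edgeDeg_nonneg E v
  refine ⟨mul_nonneg (by linarith) (by linarith), ?_⟩
  rw [pow_two]
  exact mul_le_mul (by linarith) (by linarith) (by linarith) (by linarith)

lemma numReg_insert_eq_zero {E : Finset (Sym2 (Fin n))} (hE : numReg d E = 0) (x y : Fin n) :
    numReg d (insert s(x, y) E) = 0 :=
  le_antisymm (hE ▸ numReg_insert_le E x y) (numReg_nonneg _)

/-- First-order estimate for the number of regular graphs containing one more edge. -/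
lemma abs_numReg_insert_sub_le {K p : ℝ} (hp : EdgeBound n d K p) (hp0 : 0 ≤ p) (hp1 : p ≤ 1)
    (hd : 2 ≤ d) {E : Finset (Sym2 (Fin n))} {u v : Fin n} (huv : u ≠ v) (he : s(u, v) ∉ E)
    (hD : degSum E + 6 ≤ K) :
    |d * n * numReg d (insert s(u, v) E) -
      (d - edgeDeg E u) * (d - edgeDeg E v) * numReg d E| ≤ (K + 9) * p * d ^ 2 * numReg d E := by
  rcases eq_or_ne (numReg d E) 0 with h0 | h0
  · simp [numReg_insert_eq_zero h0, h0]
  obtain ⟨hr0, hr1⟩ := sub_edgeDeg_mul_mem (edgeDeg_le_of_numReg_ne_zero h0 u)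
    (edgeDeg_le_of_numReg_ne_zero h0 v)
  have hd' : (2 : ℝ) ≤ d := by exact_mod_cast hd
  have hA : numReg d (insert s(u, v) E) ≤ p * numReg d E := hp E u v (by linarith) he
  have hA0 := numReg_nonneg (d := d) (insert s(u, v) E)
  have hM0 := numReg_nonneg (d := d) E
  have hD0 := degSum_nonneg E
  have key := sum_forwardSwitches_eq (d := d) huv he
  have h1 : (d * n - degSum E - 2 * d - 2 * d ^ 2) * numReg d (insert s(u, v) E) ≤
      ∑ G ∈ regGraphs d (insert s(u, v) E), forwardSwitches E u v G := by
    refine le_trans (le_of_eq ?_) (Finset.card_nsmul_le_sum _ _ _ fun G hG =>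
      le_forwardSwitches (regGraphs_insert_subset E u v hG))
    rw [nsmul_eq_mul, numReg, mul_comm]
  have h2 : ∑ G ∈ regGraphs d (insert s(u, v) E), forwardSwitches E u v G ≤
      d * n * numReg d (insert s(u, v) E) := by
    refine (Finset.sum_le_card_nsmul _ _ _ fun G hG => forwardSwitches_le
      (regGraphs_insert_subset E u v hG)).trans (le_of_eq ?_)
    rw [nsmul_eq_mul, numReg, mul_comm]
  have h3 := sum_closePairs_nonneg (d := d) (E := E) u v subset_rfl
  have h4 := sum_closePairs_nonneg (d := d) u v (Finset.subset_insert s(u, v) E)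
  have h5 := sum_closePairs_le hp hp0 (F := E) huv subset_rfl (fun e he => Or.inl he) (by linarith)
  have h6 := sum_closePairs_le hp hp0 huv (Finset.subset_insert s(u, v) E)
    (fun e he => (Finset.mem_insert.1 he).symm) (by linarith [degSum_insert_le E u v])
  set A := numReg d (insert s(u, v) E)
  set M := numReg d E
  have hq : 0 ≤ p * d + p * (d : ℝ) ^ 2 := by positivity
  have hpM : 0 ≤ p * M := mul_nonneg hp0 hM0
  have h7 : (p * d + p * (d : ℝ) ^ 2) * A ≤ (p * d + p * (d : ℝ) ^ 2) * M :=
    mul_le_mul_of_nonneg_left (by nlinarith) hq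
  have h8 : (d - edgeDeg E u : ℝ) * (d - edgeDeg E v) * A ≤ d ^ 2 * (p * M) :=
    mul_le_mul hr1 hA hA0 (by positivity)
  have h8' : 0 ≤ (d - edgeDeg E u : ℝ) * (d - edgeDeg E v) * A := mul_nonneg hr0 hA0
  have h9 : (degSum E + 2 * d + 2 * d ^ 2) * A ≤ (K + 3 * d ^ 2) * (p * M) :=
    mul_le_mul (by nlinarith) hA hA0 (by nlinarith)
  have h10 : (p * d + p * (d : ℝ) ^ 2) * M ≤ 2 * d ^ 2 * (p * M) := by
    have : (p * d + p * (d : ℝ) ^ 2) * M = (d + d ^ 2) * (p * M) := by ring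
    rw [this]
    exact mul_le_mul_of_nonneg_right (by nlinarith) hpM
  have h11 : K * (p * M) ≤ K * (d ^ 2 * (p * M)) :=
    mul_le_mul_of_nonneg_left (by nlinarith) (by linarith)
  have h12 : 0 ≤ (d : ℝ) ^ 2 * (p * M) := by positivity
  have e1 : (K + 9) * p * d ^ 2 * M = K * (d ^ 2 * (p * M)) + 9 * (d ^ 2 * (p * M)) := by ring
  rw [e1, abs_le]
  constructor <;> nlinarith

/-- The leading-order probability that the edge `uv` is present in a regular graph containing
`E`. -/
def edgeRate (d : ℕ) (E : Finset (Sym2 (Fin n))) (u v : Fin n) : ℝ :=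
  (d - edgeDeg E u) * (d - edgeDeg E v) / (d * n)

lemma edgeRate_mem {p : ℝ} (hd : 2 ≤ d) (hn : 0 < n) (hpn : p * n = 2 * d)
    {E : Finset (Sym2 (Fin n))} {u v : Fin n} (hu : edgeDeg E u ≤ d) (hv : edgeDeg E v ≤ d) :
    0 ≤ edgeRate d E u v ∧ edgeRate d E u v ≤ p := by
  obtain ⟨h0, h1⟩ := sub_edgeDeg_mul_mem hu hv
  have hd' : (2 : ℝ) ≤ d := by exact_mod_cast hd
  have hn' : (0 : ℝ) < n := by exact_mod_cast hn
  refine ⟨div_nonneg h0 (by positivity), ?_⟩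
  unfold edgeRate
  rw [div_le_iff₀ (by positivity)]
  calc _ ≤ (d : ℝ) ^ 2 := h1
    _ ≤ d * (p * n) := by rw [hpn]; nlinarith
    _ = p * (d * n) := by ring

lemma abs_numReg_insert_sub_edgeRate_le {K p : ℝ} (hp : EdgeBound n d K p) (hn : 0 < n)
    (hpn : p * n = 2 * d) (hp1 : p ≤ 1) (hd : 2 ≤ d) {E : Finset (Sym2 (Fin n))} {u v : Fin n}
    (huv : u ≠ v) (he : s(u, v) ∉ E) (hD : degSum E + 6 ≤ K) :
    |numReg d (insert s(u, v) E) - edgeRate d E u v * numReg d E| ≤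
      (K + 9) * p ^ 2 * numReg d E := by
  have hd' : (2 : ℝ) ≤ d := by exact_mod_cast hd
  have hn' : (0 : ℝ) < n := by exact_mod_cast hn
  have hp0 : 0 ≤ p := by
    by_contra! h
    nlinarith
  have h := abs_numReg_insert_sub_le hp hp0 hp1 hd huv he hD
  have hdn : (0 : ℝ) < d * n := by positivity
  have e1 : d * n * numReg d (insert s(u, v) E) -
      (d - edgeDeg E u) * (d - edgeDeg E v) * numReg d E =
      d * n * (numReg d (insert s(u, v) E) - edgeRate d E u v * numReg d E) := by
    unfold edgeRate
    field_simp
  rw [e1, abs_mul, abs_of_pos hdn] at h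
  refine le_of_mul_le_mul_left (h.trans ?_) hdn
  have e2 : d * n * ((K + 9) * p ^ 2 * numReg d E) =
      d * (p * n) * ((K + 9) * p * numReg d E) := by ring
  rw [e2, hpn]
  have h3 : 0 ≤ (K + 9) * p * numReg d E :=
    mul_nonneg (mul_nonneg (by linarith [degSum_nonneg E]) hp0) (numReg_nonneg _)
  nlinarith [mul_nonneg (sq_nonneg (d : ℝ)) h3]

lemma abs_sub_mul_le {A B M r s c p q : ℝ} (h1 : |A - s * M| ≤ c * M) (h2 : |B - r * A| ≤ q * A)
    (hA : A ≤ p * M) (hr0 : 0 ≤ r) (hrp : r ≤ p) (hq : 0 ≤ q) :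
    |B - r * s * M| ≤ (q * p + p * c) * M := by
  have e : B - r * s * M = (B - r * A) + r * (A - s * M) := by ring
  rw [e]
  refine (abs_add_le _ _).trans ?_
  rw [abs_mul, abs_of_nonneg hr0]
  have h3 : r * |A - s * M| ≤ p * (c * M) := mul_le_mul hrp h1 (abs_nonneg _) (hr0.trans hrp)
  nlinarith

lemma notMem_of_edgeDeg_eq_zero {E : Finset (Sym2 (Fin n))} {x : Fin n} (h : edgeDeg E x = 0)
    (y : Fin n) : s(y, x) ∉ E := by
  intro hm
  rw [Sym2.eq_swap] at hm
  have := Finset.single_le_sum (f := edgeInd E x) (fun _ _ => edgeInd_nonneg _ _ _)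
    (Finset.mem_univ y)
  have h2 : ∑ y, edgeInd E x y = 0 := h
  rw [h2] at this
  simp only [edgeInd, hm, if_true] at this
  linarith

lemma edgeDeg_eq_zero_or_one_le (E : Finset (Sym2 (Fin n))) (x : Fin n) :
    edgeDeg E x = 0 ∨ 1 ≤ edgeDeg E x := by
  have : edgeDeg E x = ((Finset.univ.filter fun y => s(x, y) ∈ E).card : ℝ) := by
    simp [edgeDeg, edgeInd]
  rw [this]
  rcases Nat.eq_zero_or_pos (Finset.univ.filter fun y => s(x, y) ∈ E).card with h | h
  · left; simp [h]
  · right; exact_mod_cast h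

lemma abs_numReg_cherry_sub_le {K p : ℝ} (hp : EdgeBound n d K p) (hn : 0 < n)
    (hpn : p * n = 2 * d) (hp1 : p ≤ 1) (hd : 2 ≤ d) {E : Finset (Sym2 (Fin n))} {u v x : Fin n}
    (huv : u ≠ v) (hux : u ≠ x) (hvx : v ≠ x) (hx : edgeDeg E x = 0) (hD : degSum E + 8 ≤ K) :
    |numReg d (insert s(v, x) (insert s(u, x) E)) -
      (d - edgeDeg E u) * (d - edgeDeg E v) * (d - 1) / (d * n ^ 2) * numReg d E| ≤
      2 * (K + 9) * p ^ 3 * numReg d E := by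
  have hd' : (2 : ℝ) ≤ d := by exact_mod_cast hd
  have hn' : (0 : ℝ) < n := by exact_mod_cast hn
  have hK : 0 ≤ K + 9 := by linarith [degSum_nonneg E]
  rcases eq_or_ne (numReg d E) 0 with h0 | h0
  · simp [numReg_insert_eq_zero (numReg_insert_eq_zero h0 u x), h0]
  have e1 := notMem_of_edgeDeg_eq_zero hx u
  have e2 : s(v, x) ∉ insert s(u, x) E := by
    rw [Finset.mem_insert, not_or]
    refine ⟨?_, notMem_of_edgeDeg_eq_zero hx v⟩
    rw [Sym2.eq_iff]; grind
  have dv : edgeDeg (insert s(u, x) E) v = edgeDeg E v := by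
    simp [edgeDeg_insert hux e1, huv.symm, hvx]
  have dx : edgeDeg (insert s(u, x) E) x = 1 := by
    simp [edgeDeg_insert hux e1, hx, hux.symm]
  have a1 := abs_numReg_insert_sub_edgeRate_le hp hn hpn hp1 hd hux e1 (by linarith)
  have a2 := abs_numReg_insert_sub_edgeRate_le hp hn hpn hp1 hd hvx e2
    (by linarith [degSum_insert_le E u x])
  obtain ⟨r0, r1⟩ := edgeRate_mem (E := insert s(u, x) E) (u := v) (v := x) hd hn hpn
    (dv ▸ edgeDeg_le_of_numReg_ne_zero h0 v) (by rw [dx]; linarith)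
  refine (le_of_eq ?_).trans ((abs_sub_mul_le a1 a2 (hp E u x (by linarith) e1) r0 r1
    (by positivity)).trans (le_of_eq (by ring)))
  congr 3
  unfold edgeRate
  rw [dv, dx, hx]
  field_simp
  ring

lemma abs_numReg_path_sub_le {K p : ℝ} (hp : EdgeBound n d K p) (hn : 0 < n)
    (hpn : p * n = 2 * d) (hp1 : p ≤ 1) (hd : 2 ≤ d) {E : Finset (Sym2 (Fin n))}
    {u v x y : Fin n} (huv : u ≠ v) (hux : u ≠ x) (hvx : v ≠ x) (huy : u ≠ y) (hvy : v ≠ y)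
    (hxy : x ≠ y) (hx : edgeDeg E x = 0) (hy : edgeDeg E y = 0) (hD : degSum E + 10 ≤ K) :
    |numReg d (insert s(x, y) (insert s(v, y) (insert s(u, x) E))) -
      (d - edgeDeg E u) * (d - edgeDeg E v) * (d - 1) ^ 2 / (d * n ^ 3) * numReg d E| ≤
      3 * (K + 9) * p ^ 4 * numReg d E := by
  have hd' : (2 : ℝ) ≤ d := by exact_mod_cast hd
  have hn' : (0 : ℝ) < n := by exact_mod_cast hn
  have hp0 : 0 ≤ p := by
    by_contra! h
    nlinarith
  have hK : 0 ≤ K + 9 := by linarith [degSum_nonneg E]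
  rcases eq_or_ne (numReg d E) 0 with h0 | h0
  · simp [numReg_insert_eq_zero (numReg_insert_eq_zero (numReg_insert_eq_zero h0 u x) v y), h0]
  have e1 := notMem_of_edgeDeg_eq_zero hx u
  have e2 : s(v, y) ∉ insert s(u, x) E := by
    rw [Finset.mem_insert, not_or]
    refine ⟨?_, notMem_of_edgeDeg_eq_zero hy v⟩
    rw [Sym2.eq_iff]; grind
  have e3 : s(x, y) ∉ insert s(v, y) (insert s(u, x) E) := by
    rw [Finset.mem_insert, Finset.mem_insert, not_or, not_or]
    refine ⟨?_, ?_, notMem_of_edgeDeg_eq_zero hy x⟩ <;> rw [Sym2.eq_iff] <;> grind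
  have dv : edgeDeg (insert s(u, x) E) v = edgeDeg E v := by
    simp [edgeDeg_insert hux e1, huv.symm, hvx]
  have dy : edgeDeg (insert s(u, x) E) y = 0 := by
    simp [edgeDeg_insert hux e1, hy, huy.symm, hxy.symm]
  have dx' : edgeDeg (insert s(v, y) (insert s(u, x) E)) x = 1 := by
    simp [edgeDeg_insert hvy e2, edgeDeg_insert hux e1, hx, hux.symm, hvx.symm, hxy]
  have dy' : edgeDeg (insert s(v, y) (insert s(u, x) E)) y = 1 := by
    simp [edgeDeg_insert hvy e2, dy, hvy.symm]
  have hD1 := degSum_insert_le E u x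
  have hD2 := degSum_insert_le (insert s(u, x) E) v y
  have a1 := abs_numReg_insert_sub_edgeRate_le hp hn hpn hp1 hd hux e1 (by linarith)
  have a2 := abs_numReg_insert_sub_edgeRate_le hp hn hpn hp1 hd hvy e2 (by linarith)
  have a3 := abs_numReg_insert_sub_edgeRate_le hp hn hpn hp1 hd hxy e3 (by linarith)
  obtain ⟨r0, r1⟩ := edgeRate_mem (E := insert s(u, x) E) (u := v) (v := y) hd hn hpn
    (dv ▸ edgeDeg_le_of_numReg_ne_zero h0 v) (by rw [dy]; linarith)
  obtain ⟨s0, s1⟩ := edgeRate_mem (E := insert s(v, y) (insert s(u, x) E)) (u := x) (v := y)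
    hd hn hpn (by rw [dx']; linarith) (by rw [dy']; linarith)
  have b1 := abs_sub_mul_le a1 a2 (hp E u x (by linarith) e1) r0 r1 (by positivity)
  have b2 : numReg d (insert s(v, y) (insert s(u, x) E)) ≤ p ^ 2 * numReg d E := by
    calc _ ≤ p * numReg d (insert s(u, x) E) := hp _ _ _ (by linarith) e2
      _ ≤ p * (p * numReg d E) := mul_le_mul_of_nonneg_left (hp E u x (by linarith) e1) hp0
      _ = _ := by ring
  set N2 := numReg d (insert s(v, y) (insert s(u, x) E))
  set N3 := numReg d (insert s(x, y) (insert s(v, y) (insert s(u, x) E)))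
  set ρ := edgeRate d (insert s(v, y) (insert s(u, x) E)) x y with hρ
  set σ := edgeRate d (insert s(u, x) E) v y * edgeRate d E u x with hσ
  have e4 : (d - edgeDeg E u) * (d - edgeDeg E v) * (d - 1) ^ 2 / (d * n ^ 3) = ρ * σ := by
    rw [hρ, hσ]
    unfold edgeRate
    rw [dv, dy, dx', dy', hx]
    field_simp
    ring
  have e5 : N3 - ρ * σ * numReg d E = (N3 - ρ * N2) + ρ * (N2 - σ * numReg d E) := by ring
  rw [e4, e5]
  refine (abs_add_le _ _).trans ?_
  rw [abs_mul, abs_of_nonneg s0]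
  have h3 := mul_le_mul s1 b1 (abs_nonneg _) hp0
  have h4 : (K + 9) * p ^ 2 * N2 ≤ (K + 9) * p ^ 2 * (p ^ 2 * numReg d E) :=
    mul_le_mul_of_nonneg_left b2 (by positivity)
  have e6 : 3 * (K + 9) * p ^ 4 * numReg d E = (K + 9) * p ^ 2 * (p ^ 2 * numReg d E) +
    p * (((K + 9) * p ^ 2 * p + p * ((K + 9) * p ^ 2)) * numReg d E) := by ring
  linarith

lemma adjInd_sub_edgeInd_eq_zero {E : Finset (Sym2 (Fin n))} {G : SimpleGraph (Fin n)}
    (hG : G ∈ regGraphs d E) {x y : Fin n} (h : s(x, y) ∈ E) :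
    adjInd G x y - edgeInd E x y = 0 := by
  have h1 := edgeInd_le_adjInd hG x y
  have h2 := adjInd_le_one G x y
  simp only [edgeInd, h, if_true] at *
  linarith

lemma sum_cherry_mem {K p : ℝ} (hp : EdgeBound n d K p) (hp0 : 0 ≤ p)
    {E : Finset (Sym2 (Fin n))} {u v : Fin n} (huv : u ≠ v) (hD : degSum E + 2 ≤ K) (x : Fin n) :
    0 ≤ ∑ G ∈ regGraphs d E, (adjInd G u x - edgeInd E u x) * (adjInd G v x - edgeInd E v x) ∧
    ∑ G ∈ regGraphs d E, (adjInd G u x - edgeInd E u x) * (adjInd G v x - edgeInd E v x) ≤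
      p ^ 2 * numReg d E := by
  have hle : ∀ G ∈ regGraphs d E, ∀ x y, 0 ≤ adjInd G x y - edgeInd E x y := fun G hG x y =>
    sub_nonneg.2 (edgeInd_le_adjInd hG x y)
  refine ⟨Finset.sum_nonneg fun G hG => mul_nonneg (hle G hG _ _) (hle G hG _ _), ?_⟩
  by_cases hux : s(u, x) ∈ E
  · rw [Finset.sum_eq_zero fun G hG => by rw [adjInd_sub_edgeInd_eq_zero hG hux, zero_mul]]
    exact mul_nonneg (by positivity) (numReg_nonneg _)
  · calc _ ≤ ∑ G ∈ regGraphs d E, (adjInd G v x - edgeInd E v x) * adjInd G u x := by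
          refine Finset.sum_le_sum fun G hG => ?_
          rw [mul_comm]
          exact mul_le_mul_of_nonneg_left (by linarith [edgeInd_nonneg E u x]) (hle G hG _ _)
      _ ≤ p * numReg d (insert s(u, x) E) := by
          refine sum_mul_adjInd_le hp hp0 E E hD v x u x fun hux' h => ?_
          rcases Finset.mem_insert.1 h with h | h
          · rw [Sym2.eq_iff] at h; grind
          · exact h
      _ ≤ p * (p * numReg d E) := mul_le_mul_of_nonneg_left (hp E u x (by linarith) hux) hp0
      _ = _ := by ring

lemma sum_path_mem {K p : ℝ} (hp : EdgeBound n d K p) (hp0 : 0 ≤ p)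
    {E : Finset (Sym2 (Fin n))} {u v x y : Fin n} (hxv : x ≠ v) (hyu : y ≠ u)
    (hD : degSum E + 4 ≤ K) :
    0 ≤ ∑ G ∈ regGraphs d E, (adjInd G u x - edgeInd E u x) * (adjInd G v y - edgeInd E v y) *
      adjInd G x y ∧
    ∑ G ∈ regGraphs d E, (adjInd G u x - edgeInd E u x) * (adjInd G v y - edgeInd E v y) *
      adjInd G x y ≤ p ^ 2 * numReg d (insert s(x, y) E) := by
  have hle : ∀ G ∈ regGraphs d E, ∀ x y, 0 ≤ adjInd G x y - edgeInd E x y := fun G hG x y =>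
    sub_nonneg.2 (edgeInd_le_adjInd hG x y)
  refine ⟨Finset.sum_nonneg fun G hG => mul_nonneg (mul_nonneg (hle G hG _ _) (hle G hG _ _))
    (adjInd_nonneg _ _ _), ?_⟩
  have h0 : 0 ≤ p ^ 2 * numReg d (insert s(x, y) E) :=
    mul_nonneg (by positivity) (numReg_nonneg _)
  rcases eq_or_ne x y with rfl | hxy
  · simpa using h0
  by_cases hux : s(u, x) ∈ E
  · rw [Finset.sum_eq_zero fun G hG => by
      rw [adjInd_sub_edgeInd_eq_zero hG hux, zero_mul, zero_mul]]
    exact h0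
  · have hux2 : s(u, x) ∉ insert s(x, y) E := by
      rw [Finset.mem_insert, not_or]
      refine ⟨?_, hux⟩
      rw [Sym2.eq_iff]; grind
    have := degSum_insert_le E x y
    calc _ ≤ ∑ G ∈ regGraphs d E, (adjInd G v y - edgeInd E v y) * adjInd G u x *
            adjInd G x y := by
          refine Finset.sum_le_sum fun G hG => ?_
          refine mul_le_mul_of_nonneg_right ?_ (adjInd_nonneg _ _ _)
          rw [mul_comm]
          exact mul_le_mul_of_nonneg_left (by linarith [edgeInd_nonneg E u x]) (hle G hG _ _)
      _ ≤ p * numReg d (insert s(u, x) (insert s(x, y) E)) := by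
          refine sum_mul_adjInd_mul_adjInd_le hp hp0 E E hD v y x y u x fun _ hux' h => ?_
          rcases Finset.mem_insert.1 h with h | h
          · rw [Sym2.eq_iff] at h; grind
          rcases Finset.mem_insert.1 h with h | h
          · rw [Sym2.eq_iff] at h; grind
          · exact h
      _ ≤ p * (p * numReg d (insert s(x, y) E)) :=
          mul_le_mul_of_nonneg_left (hp _ u x (by linarith) hux2) hp0
      _ = _ := by ring

/-- A weight that is at least one unless `x` is distinct from `u` and `v` and is not covered by
`E`. -/
def touchWeight (E : Finset (Sym2 (Fin n))) (u v x : Fin n) : ℝ :=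
  edgeDeg E x + ((if x = u then 1 else 0) + (if x = v then 1 else 0))

lemma touchWeight_cases (E : Finset (Sym2 (Fin n))) (u v x : Fin n) :
    (edgeDeg E x = 0 ∧ u ≠ x ∧ v ≠ x) ∨ 1 ≤ touchWeight E u v x := by
  have h0 := edgeDeg_nonneg E x
  unfold touchWeight
  by_cases hu : x = u
  · right; rw [if_pos hu]; split_ifs <;> linarith
  by_cases hv : x = v
  · right; rw [if_pos hv]; split_ifs; linarith
  rcases edgeDeg_eq_zero_or_one_le E x with h | h
  · exact Or.inl ⟨h, Ne.symm hu, Ne.symm hv⟩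
  · right; rw [if_neg hu, if_neg hv]; linarith

lemma touchWeight_nonneg (E : Finset (Sym2 (Fin n))) (u v x : Fin n) :
    0 ≤ touchWeight E u v x := by
  have h0 := edgeDeg_nonneg E x
  unfold touchWeight
  split_ifs <;> linarith

lemma sum_touchWeight (E : Finset (Sym2 (Fin n))) (u v : Fin n) :
    ∑ x, touchWeight E u v x = degSum E + 2 := by
  simp only [touchWeight, Finset.sum_add_distrib, degSum]
  simp
  norm_num

lemma abs_sum_sub_le_sum {ι : Type*} (s : Finset ι) (f g h : ι → ℝ)
    (hf : ∀ i ∈ s, |f i - g i| ≤ h i) : |∑ i ∈ s, f i - ∑ i ∈ s, g i| ≤ ∑ i ∈ s, h i := by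
  rw [← Finset.sum_sub_distrib]
  exact (Finset.abs_sum_le_sum_abs _ _).trans (Finset.sum_le_sum hf)

lemma abs_sum_cherry_sub_le {K p : ℝ} (hp : EdgeBound n d K p) (hn : 0 < n)
    (hpn : p * n = 2 * d) (hp0 : 0 ≤ p) (hp1 : p ≤ 1) (hd : 2 ≤ d) {E : Finset (Sym2 (Fin n))}
    {u v : Fin n} (huv : u ≠ v) (hD : degSum E + 8 ≤ K) :
    |∑ G ∈ regGraphs d E, ∑ x, (adjInd G u x - edgeInd E u x) * (adjInd G v x - edgeInd E v x) -
      (d - edgeDeg E u) * (d - edgeDeg E v) * (d - 1) / (d * n) * numReg d E| ≤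
      (4 * (K + 9) * d + K) * p ^ 2 * numReg d E := by
  have hd' : (2 : ℝ) ≤ d := by exact_mod_cast hd
  have hn' : (0 : ℝ) < n := by exact_mod_cast hn
  have hK : 0 ≤ K + 9 := by linarith [degSum_nonneg E]
  have hM := numReg_nonneg (d := d) E
  set ρ : ℝ := (d - edgeDeg E u) * (d - edgeDeg E v) * (d - 1) / (d * n ^ 2) with hρ
  have e1 : (d - edgeDeg E u) * (d - edgeDeg E v) * (d - 1) / (d * n) * numReg d E =
      ∑ _x : Fin n, ρ * numReg d E := by
    rw [Finset.sum_const, Finset.card_univ, Fintype.card_fin, nsmul_eq_mul, hρ]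
    field_simp
  rw [e1, Finset.sum_comm]
  have hρ0 : 0 ≤ ρ * numReg d E ∧ ρ * numReg d E ≤ p ^ 2 * numReg d E := by
    rcases eq_or_ne (numReg d E) 0 with h0 | h0
    · simp [h0]
    obtain ⟨s0, s1⟩ := sub_edgeDeg_mul_mem (edgeDeg_le_of_numReg_ne_zero h0 u)
      (edgeDeg_le_of_numReg_ne_zero h0 v)
    refine ⟨mul_nonneg (div_nonneg (mul_nonneg s0 (by linarith)) (by positivity)) hM, ?_⟩
    refine mul_le_mul_of_nonneg_right ?_ hM
    rw [hρ, div_le_iff₀ (by positivity)]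
    calc _ ≤ (d : ℝ) ^ 2 * d := mul_le_mul s1 (by linarith) (by linarith) (by positivity)
      _ ≤ d * (2 * d) ^ 2 := by nlinarith [pow_pos (show (0 : ℝ) < d by linarith) 3]
      _ = _ := by rw [← hpn]; ring
  refine (abs_sum_sub_le_sum _ _ _ (fun x => 2 * (K + 9) * p ^ 3 * numReg d E +
    touchWeight E u v x * (p ^ 2 * numReg d E)) fun x _ => ?_).trans ?_
  · have w0 := touchWeight_nonneg E u v x
    have hpM : 0 ≤ p ^ 2 * numReg d E := by positivity
    have hpM3 : 0 ≤ 2 * (K + 9) * p ^ 3 * numReg d E := by positivity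
    rcases touchWeight_cases E u v x with ⟨hx, hux, hvx⟩ | hw
    · have h1 := abs_numReg_cherry_sub_le hp hn hpn hp1 hd huv hux hvx hx hD
      have e2 : ∑ G ∈ regGraphs d E, (adjInd G u x - edgeInd E u x) *
          (adjInd G v x - edgeInd E v x) = numReg d (insert s(v, x) (insert s(u, x) E)) := by
        rw [← sum_adjInd_eq_numReg, ← sum_mul_adjInd]
        refine Finset.sum_congr rfl fun G _ => ?_
        simp only [edgeInd, notMem_of_edgeDeg_eq_zero hx, if_false]
        ring
      rw [e2]
      have : 0 ≤ touchWeight E u v x * (p ^ 2 * numReg d E) := mul_nonneg w0 hpM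
      linarith
    · obtain ⟨t0, t1⟩ := sum_cherry_mem (d := d) hp hp0 huv (by linarith) x
      have h1 : p ^ 2 * numReg d E ≤ touchWeight E u v x * (p ^ 2 * numReg d E) :=
        le_mul_of_one_le_left hpM hw
      rw [abs_le]
      constructor <;> linarith [hρ0.1, hρ0.2]
  · have e4 : ∑ x, touchWeight E u v x * (p ^ 2 * numReg d E) =
        (degSum E + 2) * (p ^ 2 * numReg d E) := by
      rw [← Finset.sum_mul, sum_touchWeight]
    rw [Finset.sum_add_distrib, e4, Finset.sum_const, Finset.card_univ, Fintype.card_fin,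
      nsmul_eq_mul]
    have e3 : n * (2 * (K + 9) * p ^ 3 * numReg d E) =
        2 * (K + 9) * (p * n) * p ^ 2 * numReg d E := by ring
    rw [e3, hpn]
    have h2 : (degSum E + 2) * (p ^ 2 * numReg d E) ≤ K * (p ^ 2 * numReg d E) :=
      mul_le_mul_of_nonneg_right (by linarith) (by positivity)
    linarith

lemma abs_sum_path_sub_le {K p : ℝ} (hp : EdgeBound n d K p) (hn : 0 < n)
    (hpn : p * n = 2 * d) (hp0 : 0 ≤ p) (hp1 : p ≤ 1) (hd : 2 ≤ d) {E : Finset (Sym2 (Fin n))}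
    {u v : Fin n} (huv : u ≠ v) (hD : degSum E + 10 ≤ K) :
    |∑ G ∈ regGraphs d E, ∑ x, ∑ y, (if x = v ∨ y = u then 0 else 1) *
      ((adjInd G u x - edgeInd E u x) * (adjInd G v y - edgeInd E v y) * adjInd G x y) -
      (d - edgeDeg E u) * (d - edgeDeg E v) * (d - 1) ^ 2 / (d * n) * numReg d E| ≤
      (12 * (K + 9) * d + 2 + 6 * K) * d * p ^ 2 * numReg d E := by
  have hd' : (2 : ℝ) ≤ d := by exact_mod_cast hd
  have hn' : (0 : ℝ) < n := by exact_mod_cast hn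
  have hK : 0 ≤ K + 9 := by linarith [degSum_nonneg E]
  have hM := numReg_nonneg (d := d) E
  set ρ : ℝ := (d - edgeDeg E u) * (d - edgeDeg E v) * (d - 1) ^ 2 / (d * n ^ 3) with hρ
  have e1 : (d - edgeDeg E u) * (d - edgeDeg E v) * (d - 1) ^ 2 / (d * n) * numReg d E =
      ∑ _x : Fin n, ∑ _y : Fin n, ρ * numReg d E := by
    simp only [Finset.sum_const, Finset.card_univ, Fintype.card_fin, nsmul_eq_mul, hρ]
    field_simp
  have e2 : ∑ G ∈ regGraphs d E, ∑ x, ∑ y, (if x = v ∨ y = u then 0 else 1) *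
      ((adjInd G u x - edgeInd E u x) * (adjInd G v y - edgeInd E v y) * adjInd G x y) =
      ∑ x, ∑ y, (if x = v ∨ y = u then 0 else 1) * ∑ G ∈ regGraphs d E,
      ((adjInd G u x - edgeInd E u x) * (adjInd G v y - edgeInd E v y) * adjInd G x y) := by
    rw [Finset.sum_comm]
    refine Finset.sum_congr rfl fun x _ => ?_
    rw [Finset.sum_comm]
    refine Finset.sum_congr rfl fun y _ => ?_
    rw [Finset.mul_sum]
  rw [e1, e2]
  have hρ0 : 0 ≤ ρ * numReg d E ∧ ρ * numReg d E ≤ p ^ 3 * numReg d E := by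
    rcases eq_or_ne (numReg d E) 0 with h0 | h0
    · simp [h0]
    obtain ⟨s0, s1⟩ := sub_edgeDeg_mul_mem (edgeDeg_le_of_numReg_ne_zero h0 u)
      (edgeDeg_le_of_numReg_ne_zero h0 v)
    refine ⟨mul_nonneg (div_nonneg (mul_nonneg s0 (by positivity)) (by positivity)) hM, ?_⟩
    refine mul_le_mul_of_nonneg_right ?_ hM
    rw [hρ, div_le_iff₀ (by positivity)]
    calc _ ≤ (d : ℝ) ^ 2 * d ^ 2 :=
          mul_le_mul s1 (by nlinarith) (by positivity) (by positivity)
      _ ≤ d * (2 * d) ^ 3 := by nlinarith [pow_pos (show (0 : ℝ) < d by linarith) 4]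
      _ = _ := by rw [← hpn]; ring
  have hp3 : 0 ≤ p ^ 3 * numReg d E := by positivity
  have hp4 : 0 ≤ 3 * (K + 9) * p ^ 4 * numReg d E := by positivity
  have bound : ∀ x y : Fin n, |(if x = v ∨ y = u then 0 else 1) * ∑ G ∈ regGraphs d E,
      ((adjInd G u x - edgeInd E u x) * (adjInd G v y - edgeInd E v y) * adjInd G x y) -
      ρ * numReg d E| ≤ 3 * (K + 9) * p ^ 4 * numReg d E +
        (if x = y then p ^ 3 * numReg d E else 0) +
        (touchWeight E u v x + touchWeight E u v y) *
          (p ^ 3 * numReg d E + p ^ 2 * numReg d (insert s(x, y) E)) := by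
    intro x y
    have w0 := touchWeight_nonneg E u v x
    have w1 := touchWeight_nonneg E u v y
    have hN := numReg_nonneg (d := d) (insert s(x, y) E)
    have hpN : 0 ≤ p ^ 2 * numReg d (insert s(x, y) E) := by positivity
    have hite : 0 ≤ if x = y then p ^ 3 * numReg d E else 0 := by
      split_ifs <;> linarith
    have generic : 1 ≤ touchWeight E u v x + touchWeight E u v y →
        |(if x = v ∨ y = u then 0 else 1) * ∑ G ∈ regGraphs d E,
        ((adjInd G u x - edgeInd E u x) * (adjInd G v y - edgeInd E v y) * adjInd G x y) -
        ρ * numReg d E| ≤ (touchWeight E u v x + touchWeight E u v y) *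
          (p ^ 3 * numReg d E + p ^ 2 * numReg d (insert s(x, y) E)) := by
      intro hw
      refine le_trans ?_ (le_mul_of_one_le_left (by linarith) hw)
      by_cases hxy : x = v ∨ y = u
      · rw [if_pos hxy, zero_mul, zero_sub, abs_neg, abs_of_nonneg hρ0.1]
        linarith [hρ0.2]
      · rw [if_neg hxy, one_mul]
        rw [not_or] at hxy
        obtain ⟨t0, t1⟩ := sum_path_mem (d := d) hp hp0 hxy.1 hxy.2 (by linarith)
        rw [abs_le]
        constructor <;> linarith [hρ0.1, hρ0.2]
    rcases touchWeight_cases E u v x with ⟨hx, hux, hvx⟩ | hw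
    · rcases touchWeight_cases E u v y with ⟨hy, huy, hvy⟩ | hw
      · have hpos : 0 ≤ (touchWeight E u v x + touchWeight E u v y) *
            (p ^ 3 * numReg d E + p ^ 2 * numReg d (insert s(x, y) E)) := by positivity
        rcases eq_or_ne x y with rfl | hxy
        · simp only [adjInd_self, mul_zero, Finset.sum_const_zero, zero_sub, abs_neg, if_true]
          rw [abs_of_nonneg hρ0.1]
          linarith [hρ0.2]
        · have h1 := abs_numReg_path_sub_le hp hn hpn hp1 hd huv hux hvx huy hvy hxy hx hy hD
          have e3 : ∑ G ∈ regGraphs d E, ((adjInd G u x - edgeInd E u x) *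
              (adjInd G v y - edgeInd E v y) * adjInd G x y) =
              numReg d (insert s(x, y) (insert s(v, y) (insert s(u, x) E))) := by
            rw [← sum_adjInd_eq_numReg, ← sum_mul_adjInd, ← sum_mul_adjInd]
            refine Finset.sum_congr rfl fun G _ => ?_
            simp only [edgeInd, notMem_of_edgeDeg_eq_zero hx, notMem_of_edgeDeg_eq_zero hy,
              if_false]
            ring
          rw [e3, if_neg (by rintro (h | h); exacts [hvx h.symm, huy h.symm]), one_mul]
          linarith
      · linarith [generic (by linarith)]
    · linarith [generic (by linarith)]
  have total : |∑ x, ∑ y, (if x = v ∨ y = u then 0 else 1) * ∑ G ∈ regGraphs d E,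
      ((adjInd G u x - edgeInd E u x) * (adjInd G v y - edgeInd E v y) * adjInd G x y) -
      ∑ _x : Fin n, ∑ _y : Fin n, ρ * numReg d E| ≤ ∑ x : Fin n, ∑ y : Fin n,
        (3 * (K + 9) * p ^ 4 * numReg d E + (if x = y then p ^ 3 * numReg d E else 0) +
        (touchWeight E u v x + touchWeight E u v y) *
          (p ^ 3 * numReg d E + p ^ 2 * numReg d (insert s(x, y) E))) :=
    abs_sum_sub_le_sum _ _ _ _ fun x _ => abs_sum_sub_le_sum _ _ _ _ fun y _ => bound x y
  refine total.trans ?_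
  have s1 : ∑ x, ∑ y, touchWeight E u v x *
      (p ^ 3 * numReg d E + p ^ 2 * numReg d (insert s(x, y) E)) =
      (degSum E + 2) * (n * (p ^ 3 * numReg d E) + p ^ 2 * (d * numReg d E)) := by
    rw [← sum_touchWeight E u v, Finset.sum_mul]
    refine Finset.sum_congr rfl fun x _ => ?_
    have e3 : ∑ y, p ^ 2 * numReg d (insert s(x, y) E) = p ^ 2 * (d * numReg d E) := by
      rw [← Finset.mul_sum, sum_numReg_insert]
    rw [← Finset.mul_sum, Finset.sum_add_distrib, e3]
    simp
  have s2 : ∑ x, ∑ y, touchWeight E u v y *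
      (p ^ 3 * numReg d E + p ^ 2 * numReg d (insert s(x, y) E)) =
      (degSum E + 2) * (n * (p ^ 3 * numReg d E) + p ^ 2 * (d * numReg d E)) := by
    rw [← s1, Finset.sum_comm]
    simp only [Sym2.eq_swap]
  have s3 : ∑ x : Fin n, ∑ y : Fin n, (if x = y then p ^ 3 * numReg d E else 0) =
      n * (p ^ 3 * numReg d E) := by simp
  simp only [Finset.sum_add_distrib, add_mul (touchWeight _ _ _ _), s1, s2, s3]
  simp only [Finset.sum_const, Finset.card_univ, Fintype.card_fin, nsmul_eq_mul]
  have e4 : (n : ℝ) * (n * (3 * (K + 9) * p ^ 4 * numReg d E)) =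
      3 * (K + 9) * (p * n) ^ 2 * p ^ 2 * numReg d E := by ring
  have e5 : n * (p ^ 3 * numReg d E) = (p * n) * (p ^ 2 * numReg d E) := by ring
  rw [e4, e5, hpn]
  have hq : 0 ≤ d * (p ^ 2 * numReg d E) := by positivity
  have h2 : (degSum E + 2) * (d * (p ^ 2 * numReg d E)) ≤ K * (d * (p ^ 2 * numReg d E)) :=
    mul_le_mul_of_nonneg_right (by linarith) hq
  linarith

/-- The expected number of close pairs, up to a relative error of second order. -/
lemma abs_sum_closePairs_sub_le {K p : ℝ} (hp : EdgeBound n d K p) (hn : 0 < n)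
    (hpn : p * n = 2 * d) (hp0 : 0 ≤ p) (hp1 : p ≤ 1) (hd : 2 ≤ d) {E : Finset (Sym2 (Fin n))}
    {u v : Fin n} (huv : u ≠ v) (hD : degSum E + 10 ≤ K) :
    |∑ G ∈ regGraphs d E, closePairs E u v G -
      (d - edgeDeg E u) * (d - edgeDeg E v) * (d - 1) / n * numReg d E| ≤
      23 * (K + 9) * d ^ 2 * p ^ 2 * numReg d E := by
  have hd' : (2 : ℝ) ≤ d := by exact_mod_cast hd
  have hn' : (0 : ℝ) < n := by exact_mod_cast hn
  have hM := numReg_nonneg (d := d) E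
  have hK : 0 ≤ K := by linarith [degSum_nonneg E]
  have h1 := abs_sum_cherry_sub_le hp hn hpn hp0 hp1 hd huv (E := E) (by linarith)
  have h2 := abs_sum_path_sub_le hp hn hpn hp0 hp1 hd huv hD
  unfold closePairs
  rw [Finset.sum_add_distrib]
  have e1 : (d - edgeDeg E u) * (d - edgeDeg E v) * (d - 1) / n * numReg d E =
      (d - edgeDeg E u) * (d - edgeDeg E v) * (d - 1) / (d * n) * numReg d E +
      (d - edgeDeg E u) * (d - edgeDeg E v) * (d - 1) ^ 2 / (d * n) * numReg d E := by
    field_simp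
    ring
  rw [e1, add_sub_add_comm]
  refine (abs_add_le _ _).trans ((add_le_add h1 h2).trans ?_)
  have e2 : (4 * (K + 9) * d + K) * p ^ 2 * numReg d E +
      (12 * (K + 9) * d + 2 + 6 * K) * d * p ^ 2 * numReg d E =
      (4 * (K + 9) * d + K + (12 * (K + 9) * d + 2 + 6 * K) * d) * (p ^ 2 * numReg d E) := by
    ring
  have e3 : 23 * (K + 9) * d ^ 2 * p ^ 2 * numReg d E =
      (23 * (K + 9) * d ^ 2) * (p ^ 2 * numReg d E) := by ring
  rw [e2, e3]
  refine mul_le_mul_of_nonneg_right ?_ (by positivity)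
  have q1 : (d : ℝ) ≤ d ^ 2 := by nlinarith
  have q2 := mul_le_mul_of_nonneg_left q1 hK
  have q3 : K ≤ K * d := by nlinarith
  nlinarith

/-- The sum of the `E`-degrees of the `E`-neighbours of `u`. -/
def nbrDegSum (E : Finset (Sym2 (Fin n))) (u : Fin n) : ℝ := ∑ x, edgeInd E u x * edgeDeg E x

lemma edgeInd_le_one (E : Finset (Sym2 (Fin n))) (x y : Fin n) : edgeInd E x y ≤ 1 := by
  unfold edgeInd; split_ifs <;> norm_num

lemma nbrDegSum_mem (E : Finset (Sym2 (Fin n))) (u : Fin n) :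
    0 ≤ nbrDegSum E u ∧ nbrDegSum E u ≤ degSum E :=
  ⟨Finset.sum_nonneg fun _ _ => mul_nonneg (edgeInd_nonneg _ _ _) (edgeDeg_nonneg _ _),
    Finset.sum_le_sum fun x _ =>
      mul_le_of_le_one_left (edgeDeg_nonneg E x) (edgeInd_le_one E u x)⟩

/-- The leading term of the number of pairs of adjacent vertices that are not available for
switching out the edge `uv`. -/
def lostPairs (d : ℕ) (E : Finset (Sym2 (Fin n))) (u v : Fin n) : ℝ :=
  2 * d ^ 2 + degSum E - edgeDeg E u - edgeDeg E v - nbrDegSum E u - nbrDegSum E v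

/-- The error terms in the count of forward switches. -/
def switchError (E : Finset (Sym2 (Fin n))) (u v : Fin n) (G : SimpleGraph (Fin n)) : ℝ :=
  ∑ x, (adjInd G u x - edgeInd (insert s(u, v) E) u x) * edgeDeg E x +
  ∑ x, (adjInd G v x - edgeInd (insert s(u, v) E) v x) * edgeDeg E x +
  ∑ y, (adjInd G u y - edgeInd (insert s(u, v) E) u y) * adjInd G v y +
  ∑ x, (adjInd G v x - edgeInd (insert s(u, v) E) v x) * adjInd G u x +
  ∑ x, ∑ y, (if x = v ∨ y = u then 0 else 1) *
    ((adjInd G x y - edgeInd E x y) * adjInd G u x * adjInd G v y)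

lemma sum_adjInd_mul_edgeDeg {E : Finset (Sym2 (Fin n))} {u v : Fin n} (huv : u ≠ v)
    (he : s(u, v) ∉ E) (G : SimpleGraph (Fin n)) :
    ∑ x, adjInd G u x * edgeDeg E x =
      ∑ x, (adjInd G u x - edgeInd (insert s(u, v) E) u x) * edgeDeg E x +
        nbrDegSum E u + edgeDeg E v := by
  have : edgeDeg E v = ∑ x, (if x = v then 1 else 0) * edgeDeg E x := by simp
  rw [nbrDegSum, this, ← Finset.sum_add_distrib, ← Finset.sum_add_distrib]
  refine Finset.sum_congr rfl fun x _ => ?_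
  rw [edgeInd_insert huv he, if_pos rfl, if_neg huv]
  ring

lemma sum_sub_edgeInd_mul_adjInd {E : Finset (Sym2 (Fin n))} {u v : Fin n} (huv : u ≠ v)
    (he : s(u, v) ∉ E) (G : SimpleGraph (Fin n)) :
    ∑ y, (adjInd G u y - edgeInd E u y) * adjInd G v y =
      ∑ y, (adjInd G u y - edgeInd (insert s(u, v) E) u y) * adjInd G v y := by
  refine Finset.sum_congr rfl fun y _ => ?_
  rw [edgeInd_insert huv he]
  by_cases h : y = v
  · subst h; simp
  · simp [h, huv]

lemma forwardSwitches_eq_add_switchError {E : Finset (Sym2 (Fin n))} {u v : Fin n} (huv : u ≠ v)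
    (he : s(u, v) ∉ E) {G : SimpleGraph (Fin n)} (hG : G ∈ regGraphs d (insert s(u, v) E)) :
    forwardSwitches E u v G = d * n - lostPairs d E u v + switchError E u v G := by
  have hGE : G ∈ regGraphs d E := regGraphs_anti (Finset.subset_insert _ _) hG
  have huvG : adjInd G u v = 1 := by
    have h := edgeInd_le_adjInd hG u v
    have h1 := adjInd_le_one G u v
    simp only [edgeInd, Finset.mem_insert_self, if_true] at h
    linarith
  have hE : edgeInd E u v = 0 := by simp [edgeInd, he]
  have he' : s(v, u) ∉ E := by rwa [Sym2.eq_swap]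
  have hγ : ∀ x y, (adjInd G x y - edgeInd E x y) * adjInd G x y =
      adjInd G x y - edgeInd E x y := by
    intro x y
    rw [sub_mul, adjInd_mul_self, edgeInd_mul_adjInd hGE]
  rw [forwardSwitches_eq hGE, sum_adjInd_mul_edgeDeg huv he, sum_adjInd_mul_edgeDeg huv.symm he',
    Sym2.eq_swap (a := v)]
  have split : ∑ x, ∑ y, (adjInd G x y - edgeInd E x y) *
      ((if x = u then 1 else 0) + adjInd G u x) * ((if y = v then 1 else 0) + adjInd G v y) =
      (adjInd G u v - edgeInd E u v) + ∑ y, (adjInd G u y - edgeInd E u y) * adjInd G v y +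
      ∑ x, (adjInd G v x - edgeInd E v x) * adjInd G u x +
      ∑ x, ∑ y, (adjInd G x y - edgeInd E x y) * adjInd G u x * adjInd G v y := by
    have e1 : ∀ x y, (adjInd G x y - edgeInd E x y) *
        ((if x = u then 1 else 0) + adjInd G u x) * ((if y = v then 1 else 0) + adjInd G v y) =
        (if x = u then (if y = v then adjInd G x y - edgeInd E x y else 0) else 0) +
        (if x = u then (adjInd G x y - edgeInd E x y) * adjInd G v y else 0) +
        (if y = v then (adjInd G x y - edgeInd E x y) * adjInd G u x else 0) +
        (adjInd G x y - edgeInd E x y) * adjInd G u x * adjInd G v y := by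
      intro x y
      split_ifs <;> ring
    simp only [e1, Finset.sum_add_distrib]
    congr 2
    · congr 1
      · simp [Finset.sum_ite_irrel]
      · rw [Finset.sum_comm]; simp
    · refine Finset.sum_congr rfl fun x _ => ?_
      simp [adjInd_comm G x v, edgeInd_comm E x v]
  have split2 : ∑ x, ∑ y, (adjInd G x y - edgeInd E x y) * adjInd G u x * adjInd G v y =
      (d - edgeDeg E v) + (d - edgeDeg E u) - (adjInd G u v - edgeInd E u v) +
      ∑ x, ∑ y, (if x = v ∨ y = u then 0 else 1) *
        ((adjInd G x y - edgeInd E x y) * adjInd G u x * adjInd G v y) := by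
    have e1 : ∀ x y, (adjInd G x y - edgeInd E x y) * adjInd G u x * adjInd G v y =
        (if x = v then adjInd G x y - edgeInd E x y else 0) +
        (if y = u then adjInd G x y - edgeInd E x y else 0) -
        (if x = v then (if y = u then adjInd G x y - edgeInd E x y else 0) else 0) +
        (if x = v ∨ y = u then 0 else 1) *
        ((adjInd G x y - edgeInd E x y) * adjInd G u x * adjInd G v y) := by
      intro x y
      by_cases hx : x = v
      · subst hx
        have := hγ x y
        by_cases hy : y = u
        · subst hy
          simp only [huvG, adjInd_comm G x y, if_true, true_or]
          ring
        · simp only [hy, huvG, if_true, if_false, true_or]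
          linear_combination this
      · by_cases hy : y = u
        · subst hy
          have := hγ x y
          simp only [hx, huvG, adjInd_comm G v y, adjInd_comm G y x, if_true, if_false, or_true]
          linear_combination this
        · simp only [hx, hy, if_false, or_self]
          ring
    rw [Finset.sum_congr rfl fun x _ => Finset.sum_congr rfl fun y _ => e1 x y]
    simp only [Finset.sum_add_distrib, Finset.sum_sub_distrib]
    congr 2
    · rw [← sum_sub_edgeInd hGE v, ← sum_sub_edgeInd_left hGE u]
      congr 1
      · rw [Finset.sum_comm]; simp
      · simp
    · simp [Finset.sum_ite_irrel, adjInd_comm G v u, edgeInd_comm E v u]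
  rw [split, split2, sum_sub_edgeInd_mul_adjInd huv he, sum_sub_edgeInd_mul_adjInd huv.symm he',
    Sym2.eq_swap (a := v), switchError, lostPairs]
  ring

lemma sum_switchError_nonneg {E : Finset (Sym2 (Fin n))} (u v : Fin n) :
    0 ≤ ∑ G ∈ regGraphs d (insert s(u, v) E), switchError E u v G := by
  refine Finset.sum_nonneg fun G hG => ?_
  have h1 : ∀ x y, 0 ≤ adjInd G x y - edgeInd (insert s(u, v) E) x y := fun x y =>
    sub_nonneg.2 (edgeInd_le_adjInd hG x y)
  have h2 : ∀ x y, 0 ≤ adjInd G x y - edgeInd E x y := fun x y =>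
    sub_nonneg.2 (edgeInd_le_adjInd (regGraphs_anti (Finset.subset_insert _ _) hG) x y)
  have h3 := edgeDeg_nonneg E
  have h4 := adjInd_nonneg G
  unfold switchError
  refine add_nonneg (add_nonneg (add_nonneg (add_nonneg ?_ ?_) ?_) ?_) ?_
  · exact Finset.sum_nonneg fun x _ => mul_nonneg (h1 _ _) (h3 _)
  · exact Finset.sum_nonneg fun x _ => mul_nonneg (h1 _ _) (h3 _)
  · exact Finset.sum_nonneg fun x _ => mul_nonneg (h1 _ _) (h4 _ _)
  · exact Finset.sum_nonneg fun x _ => mul_nonneg (h1 _ _) (h4 _ _)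
  · refine Finset.sum_nonneg fun x _ => Finset.sum_nonneg fun y _ => mul_nonneg ?_
      (mul_nonneg (mul_nonneg (h2 _ _) (h4 _ _)) (h4 _ _))
    split_ifs <;> norm_num

lemma sum_sub_edgeInd_mul_edgeDeg_le {K p : ℝ} (hp : EdgeBound n d K p) (hp0 : 0 ≤ p)
    (E F : Finset (Sym2 (Fin n))) (hD : degSum F ≤ K) (u : Fin n) :
    ∑ G ∈ regGraphs d F, ∑ x, (adjInd G u x - edgeInd F u x) * edgeDeg E x ≤
      p * degSum E * numReg d F := by
  rw [Finset.sum_comm, degSum, Finset.mul_sum, Finset.sum_mul]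
  refine Finset.sum_le_sum fun x _ => ?_
  rw [← Finset.sum_mul]
  have := mul_le_mul_of_nonneg_right (sum_sub_edgeInd_le hp hp0 F F hD u x id)
    (edgeDeg_nonneg E x)
  linarith

lemma sum_sub_edgeInd_mul_adjInd_le {K p : ℝ} (hp : EdgeBound n d K p) (hp0 : 0 ≤ p)
    (F : Finset (Sym2 (Fin n))) (hD : degSum F + 2 ≤ K) {u v : Fin n} (huv : u ≠ v) :
    ∑ G ∈ regGraphs d F, ∑ x, (adjInd G u x - edgeInd F u x) * adjInd G v x ≤
      p * d * numReg d F := by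
  rw [Finset.sum_comm, mul_assoc, ← sum_numReg_insert F v, Finset.mul_sum]
  refine Finset.sum_le_sum fun x _ => sum_mul_adjInd_le hp hp0 F F hD _ _ _ _ fun hvx h => ?_
  rcases Finset.mem_insert.1 h with h | h
  · rw [Sym2.eq_iff] at h
    rcases h with h | h
    · exact absurd h.1 huv
    · exact absurd h.2.symm hvx
  · exact h

lemma sum_switchError_le {K p : ℝ} (hp : EdgeBound n d K p) (hp0 : 0 ≤ p)
    {E : Finset (Sym2 (Fin n))} {u v : Fin n} (huv : u ≠ v) (hD : degSum E + 6 ≤ K) :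
    ∑ G ∈ regGraphs d (insert s(u, v) E), switchError E u v G ≤
      p * (2 * degSum E + 2 * d + d ^ 2) * numReg d (insert s(u, v) E) := by
  have hD' := degSum_insert_le E u v
  have h1 := sum_sub_edgeInd_mul_edgeDeg_le hp hp0 E (insert s(u, v) E) (by linarith) u
  have h2 := sum_sub_edgeInd_mul_edgeDeg_le hp hp0 E (insert s(u, v) E) (by linarith) v
  have h3 := sum_sub_edgeInd_mul_adjInd_le hp hp0 (insert s(u, v) E) (by linarith) huv
  have h4 := sum_sub_edgeInd_mul_adjInd_le hp hp0 (insert s(u, v) E) (by linarith) huv.symm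
  have h5 : ∑ G ∈ regGraphs d (insert s(u, v) E), ∑ x, ∑ y, (if x = v ∨ y = u then 0 else 1) *
      ((adjInd G x y - edgeInd E x y) * adjInd G u x * adjInd G v y) ≤
      p * d ^ 2 * numReg d (insert s(u, v) E) := by
    have e : p * d ^ 2 * numReg d (insert s(u, v) E) = ∑ y, ∑ x,
        p * numReg d (insert s(u, x) (insert s(v, y) (insert s(u, v) E))) := by
      simp only [← Finset.mul_sum, sum_numReg_insert]
      ring
    rw [e, Finset.sum_comm, Finset.sum_comm (s := Finset.univ) (t := Finset.univ)]
    refine Finset.sum_le_sum fun x _ => ?_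
    rw [Finset.sum_comm]
    refine Finset.sum_le_sum fun y _ => ?_
    rw [← Finset.mul_sum]
    by_cases hxy : x = v ∨ y = u
    · rw [if_pos hxy, zero_mul]
      exact mul_nonneg hp0 (numReg_nonneg _)
    · rw [if_neg hxy, one_mul]
      rw [not_or] at hxy
      refine sum_mul_adjInd_mul_adjInd_le hp hp0 _ E (by linarith) x y v y u x
        fun hvy hux h => ?_
      simp only [Finset.mem_insert, Sym2.eq_iff] at h
      grind
  simp only [switchError, Finset.sum_add_distrib]
  linarith

/-- The relative second-order correction to `edgeRate`. -/
def edgeCorr (d : ℕ) (E : Finset (Sym2 (Fin n))) (u v : Fin n) : ℝ :=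
  (lostPairs d E u v - d * (d - 1) - (d - edgeDeg E u) * (d - edgeDeg E v)) / (d * n)

/-- The probability of an additional edge, up to a relative error of second order. -/
lemma abs_numReg_insert_sub_edgeCorr_le {K p : ℝ} (hp : EdgeBound n d K p) (hn : 0 < n)
    (hpn : p * n = 2 * d) (hp0 : 0 ≤ p) (hp1 : p ≤ 1) (hd : 2 ≤ d) {E : Finset (Sym2 (Fin n))}
    {u v : Fin n} (huv : u ≠ v) (he : s(u, v) ∉ E) (hD : degSum E + 10 ≤ K) :
    |numReg d (insert s(u, v) E) - edgeRate d E u v * (1 + edgeCorr d E u v) * numReg d E| ≤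
      (K + 9) * (K + 30) * p ^ 3 * numReg d E := by
  have hd' : (2 : ℝ) ≤ d := by exact_mod_cast hd
  have hn' : (0 : ℝ) < n := by exact_mod_cast hn
  have hDE := degSum_nonneg E
  have hM := numReg_nonneg (d := d) E
  rcases eq_or_ne (numReg d E) 0 with h0 | h0
  · have h1 := numReg_insert_le (d := d) E u v
    have h2 := numReg_nonneg (d := d) (insert s(u, v) E)
    rw [h0] at h1
    simp [h0, le_antisymm h1 h2]
  have hu := edgeDeg_le_of_numReg_ne_zero h0 u
  have hv := edgeDeg_le_of_numReg_ne_zero h0 v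
  have hu0 := edgeDeg_nonneg E u
  have hv0 := edgeDeg_nonneg E v
  obtain ⟨s0, s1⟩ := sub_edgeDeg_mul_mem hu hv
  have h1 := sum_forwardSwitches_eq (d := d) huv he
  rw [Finset.sum_congr rfl fun G hG => forwardSwitches_eq_add_switchError huv he hG,
    Finset.sum_add_distrib, Finset.sum_const, nsmul_eq_mul] at h1
  change numReg d (insert s(u, v) E) * _ + _ = _ at h1
  have w0 := sum_switchError_nonneg (d := d) (E := E) u v
  have w1 := sum_switchError_le hp hp0 (E := E) huv (by linarith)
  have c0 := sum_closePairs_nonneg (d := d) u v (Finset.subset_insert s(u, v) E)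
  have c1 := sum_closePairs_le hp hp0 huv (Finset.subset_insert s(u, v) E)
    (fun e he => (Finset.mem_insert.1 he).symm)
    (by linarith [degSum_insert_le E u v])
  have c2 := abs_sum_closePairs_sub_le hp hn hpn hp0 hp1 hd huv hD
  have a1 := abs_numReg_insert_sub_edgeRate_le hp hn hpn hp1 hd huv he (by linarith)
  have a2 := hp E u v (by linarith) he
  have a0 := numReg_nonneg (d := d) (insert s(u, v) E)
  set A := numReg d (insert s(u, v) E)
  set M := numReg d E
  set W := ∑ G ∈ regGraphs d (insert s(u, v) E), switchError E u v G
  set P := ∑ G ∈ regGraphs d E, closePairs E u v G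
  set P' := ∑ G ∈ regGraphs d (insert s(u, v) E), closePairs E u v G
  set κ := lostPairs d E u v with hκ
  set s := (d - edgeDeg E u) * (d - edgeDeg E v) with hs
  have key : d * n * (A - edgeRate d E u v * (1 + edgeCorr d E u v) * M) =
      (κ - s) * (A - edgeRate d E u v * M) - (P - s * (d - 1) / n * M) + P' - W := by
    rw [edgeCorr, edgeRate, ← hκ, ← hs]
    have : s * (d - 1) / n = s / (d * n) * (d * (d - 1)) := by field_simp
    rw [this]
    have h2 : d * n * (s / (d * n)) = s := by field_simp
    have h3 : d * n * (s / (d * n) * (1 + (κ - d * (d - 1) - s) / (d * n))) =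
      s + s / (d * n) * (κ - d * (d - 1) - s) := by field_simp
    linear_combination h1 - M * h3
  have hd2 : 2 * (d : ℝ) ≤ d ^ 2 := by nlinarith
  have hKd : K ≤ K * d ^ 2 := le_mul_of_one_le_right (by linarith) (by nlinarith)
  have hd0 : (0 : ℝ) ≤ d ^ 2 := by positivity
  have κs : |κ - s| ≤ (K + 2) * d ^ 2 := by
    obtain ⟨t0, t1⟩ := nbrDegSum_mem E u
    obtain ⟨t2, t3⟩ := nbrDegSum_mem E v
    rw [hκ, lostPairs, abs_le]
    constructor <;> linarith
  have b1 : |(κ - s) * (A - edgeRate d E u v * M)| ≤ (K + 2) * d ^ 2 * ((K + 9) * p ^ 2 * M) := by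
    rw [abs_mul]
    exact mul_le_mul κs a1 (abs_nonneg _) (mul_nonneg (by linarith) (by positivity))
  have hQ : 0 ≤ d ^ 2 * p ^ 2 * M := by positivity
  have b2 : P' ≤ (2 * K + 3) * (d ^ 2 * p ^ 2 * M) := by
    have e1 : p * d + p * d ^ 2 ≤ p * ((2 * K + 3) * d ^ 2) := by
      rw [← mul_add]
      exact mul_le_mul_of_nonneg_left (by linarith) hp0
    calc _ ≤ p * ((2 * K + 3) * d ^ 2) * (p * M) :=
          c1.trans (mul_le_mul e1 a2 a0 (mul_nonneg hp0 (mul_nonneg (by linarith) hd0)))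
      _ = _ := by ring
  have b3 : W ≤ (2 * K + 3) * (d ^ 2 * p ^ 2 * M) := by
    have e1 : p * (2 * degSum E + 2 * d + d ^ 2) ≤ p * ((2 * K + 3) * d ^ 2) :=
      mul_le_mul_of_nonneg_left (by linarith) hp0
    calc _ ≤ p * ((2 * K + 3) * d ^ 2) * (p * M) :=
          w1.trans (mul_le_mul e1 a2 a0 (mul_nonneg hp0 (mul_nonneg (by linarith) hd0)))
      _ = _ := by ring
  have b4 : |d * n * (A - edgeRate d E u v * (1 + edgeCorr d E u v) * M)| ≤
      (K + 9) * (K + 30) * (d ^ 2 * p ^ 2 * M) := by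
    rw [key]
    have hKQ : 0 ≤ K * (d ^ 2 * p ^ 2 * M) := mul_nonneg (by linarith) hQ
    rw [abs_le] at b1 c2 ⊢
    constructor <;> linarith [b1.1, b1.2, c2.1, c2.2]
  rw [abs_mul, abs_of_pos (by positivity)] at b4
  refine le_of_mul_le_mul_left (b4.trans ?_) (show (0 : ℝ) < d * n by positivity)
  have e3 : d * n * ((K + 9) * (K + 30) * p ^ 3 * M) =
      (K + 9) * (K + 30) * (d * (p * n) * p ^ 2 * M) := by ring
  rw [e3, hpn]
  refine mul_le_mul_of_nonneg_left ?_ (mul_nonneg (by linarith) (by linarith))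
  linarith

lemma exists_symmetric_finset (hdn : d < n) (he : Even (d * n)) :
    ∃ S : Finset ℕ, S.card = d ∧ ∀ i ∈ S, 0 < i ∧ i < n ∧ n - i ∈ S := by
  rcases Nat.even_or_odd d with ⟨k, hk⟩ | ⟨k, hk⟩
  · refine ⟨Finset.Icc 1 k ∪ Finset.Ico (n - k) n, ?_, fun i hi => ?_⟩
    · rw [Finset.card_union_of_disjoint]
      · simp; omega
      · rw [Finset.disjoint_left]
        intro i
        simp
        omega
    · simp at hi ⊢
      omega
  · have hn : Even n := (Nat.even_mul.1 he).resolve_left (by simp [hk])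
    obtain ⟨m, hm⟩ := hn
    refine ⟨Finset.Icc (m - k) (m + k), ?_, fun i hi => ?_⟩
    · simp; omega
    · simp at hi ⊢
      omega

lemma numReg_empty_pos (hdn : d < n) (he : Even (d * n)) :
    0 < numReg d (∅ : Finset (Sym2 (Fin n))) := by
  obtain ⟨S, hcard, hS⟩ := exists_symmetric_finset hdn he
  have : NeZero n := ⟨by omega⟩
  have hneg : ∀ z : Fin n, z.val ∈ S → (-z).val ∈ S := by
    intro z hz
    obtain ⟨h0, h1, h2⟩ := hS _ hz
    have : (-z).val = n - z.val := by
      rw [Fin.val_neg, if_neg]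
      rintro rfl
      simp at h0
    rwa [this]
  obtain ⟨G, hadj⟩ : ∃ G : SimpleGraph (Fin n), ∀ x y, G.Adj x y ↔ (x - y).val ∈ S :=
    ⟨{ Adj := fun x y => (x - y).val ∈ S
       symm := ⟨fun x y h => by simpa using hneg _ h⟩
       loopless := ⟨fun x h => by simpa using (hS _ h).1⟩ }, fun _ _ => Iff.rfl⟩
  have hG : G ∈ regGraphs d ∅ := by
    simp only [regGraphs, Finset.mem_filter, Finset.mem_univ, true_and, Finset.notMem_empty,
      false_imp_iff, implies_true, and_true]
    intro x
    have h1 : ∑ y, adjInd G x y = ∑ z : Fin n, if z.val ∈ S then (1 : ℝ) else 0 := by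
      refine Eq.trans ?_ ((Equiv.subLeft x).sum_comp _)
      exact Finset.sum_congr rfl fun y _ => if_congr (hadj x y) rfl rfl
    rw [h1, ← Finset.sum_range fun i => if i ∈ S then (1 : ℝ) else 0, Finset.sum_boole,
      Finset.filter_mem_eq_inter, Finset.inter_eq_right.2, hcard]
    exact fun i hi => Finset.mem_range.2 (hS i hi).2.1
  exact Nat.cast_pos.2 (Finset.card_pos.2 ⟨G, hG⟩)

/-- The first `i` edges of the walk `g 0, g 1, …`. -/
def walkEdges (g : ℕ → Fin n) (i : ℕ) : Finset (Sym2 (Fin n)) :=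
  (Finset.range i).image fun j => s(g j, g (j + 1))

lemma walkEdges_succ (g : ℕ → Fin n) (i : ℕ) :
    walkEdges g (i + 1) = insert s(g i, g (i + 1)) (walkEdges g i) := by
  rw [walkEdges, Finset.range_add_one, Finset.image_insert]; rfl

lemma notMem_walkEdges {ℓ : ℕ} {g : ℕ → Fin n} (hg : Set.InjOn g (Set.Iio ℓ)) {i : ℕ}
    (hi : i + 1 < ℓ) : s(g i, g (i + 1)) ∉ walkEdges g i := by
  simp only [walkEdges, Finset.mem_image, Finset.mem_range, not_exists, not_and]
  intro j hj h
  rcases Sym2.eq_iff.1 h with h | h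
  · have := hg (show j < ℓ by omega) (show i < ℓ by omega) h.1
    omega
  · have := hg (show j < ℓ by omega) (show i + 1 < ℓ by omega) h.1
    omega

lemma edgeInd_walkEdges {ℓ : ℕ} {g : ℕ → Fin n} (hg : Set.InjOn g (Set.Iio ℓ)) {i : ℕ}
    (hi : i < ℓ) (x y : Fin n) : edgeInd (walkEdges g i) x y = ∑ j ∈ Finset.range i,
      ((if x = g j then (if y = g (j + 1) then 1 else 0) else 0) +
        (if x = g (j + 1) then (if y = g j then 1 else 0) else 0)) := by
  induction i with
  | zero => simp [walkEdges, edgeInd]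
  | succ i ih =>
    have hne : g i ≠ g (i + 1) := fun h => by
      have := hg (show i < ℓ by omega) hi h
      omega
    rw [walkEdges_succ, edgeInd_insert hne (notMem_walkEdges hg hi), ih (by omega),
      Finset.sum_range_succ]

/-- Summation against the edges at a vertex of the path formed by the first `i` edges. -/
lemma sum_edgeInd_walkEdges_mul {ℓ : ℕ} {g : ℕ → Fin n} (hg : Set.InjOn g (Set.Iio ℓ)) {i k : ℕ}
    (hi : i < ℓ) (hk : k < ℓ) (w : Fin n → ℝ) :
    ∑ y, edgeInd (walkEdges g i) (g k) y * w y =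
      (if k < i then w (g (k + 1)) else 0) + (if 0 < k ∧ k ≤ i then w (g (k - 1)) else 0) := by
  simp only [edgeInd_walkEdges hg hi, Finset.sum_mul]
  rw [Finset.sum_comm]
  have h1 : ∀ j ∈ Finset.range i, ∑ y,
      ((if g k = g j then (if y = g (j + 1) then 1 else 0) else 0) +
        (if g k = g (j + 1) then (if y = g j then 1 else 0) else 0)) * w y =
      (if k = j then w (g (j + 1)) else 0) + (if k = j + 1 then w (g j) else 0) := by
    intro j hj
    have hj := Finset.mem_range.1 hj
    have e1 : g k = g j ↔ k = j := hg.eq_iff hk (show j < ℓ by omega)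
    have e2 : g k = g (j + 1) ↔ k = j + 1 := hg.eq_iff hk (show j + 1 < ℓ by omega)
    simp only [e1, e2, add_mul, Finset.sum_add_distrib]
    congr 1
    · split_ifs <;> simp
    · split_ifs <;> simp
  rw [Finset.sum_congr rfl h1, Finset.sum_add_distrib]
  congr 1
  · simp
  · rcases k with _ | k
    · simp
    · simp

lemma edgeDeg_walkEdges {ℓ : ℕ} {g : ℕ → Fin n} (hg : Set.InjOn g (Set.Iio ℓ)) {i k : ℕ}
    (hi : i < ℓ) (hk : k < ℓ) : edgeDeg (walkEdges g i) (g k) =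
      (if k < i then 1 else 0) + (if 0 < k ∧ k ≤ i then 1 else 0) := by
  simpa [edgeDeg] using sum_edgeInd_walkEdges_mul hg hi hk fun _ => 1

lemma degSum_walkEdges {ℓ : ℕ} {g : ℕ → Fin n} (hg : Set.InjOn g (Set.Iio ℓ)) {i : ℕ}
    (hi : i < ℓ) : degSum (walkEdges g i) = 2 * i := by
  simp only [degSum, edgeDeg, edgeInd_walkEdges hg hi]
  rw [Finset.sum_congr rfl fun x _ => Finset.sum_comm, Finset.sum_comm]
  simp [Finset.sum_add_distrib, Finset.sum_ite_irrel]
  ring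

lemma nbrDegSum_walkEdges {ℓ : ℕ} {g : ℕ → Fin n} (hg : Set.InjOn g (Set.Iio ℓ)) {i k : ℕ}
    (hi : i < ℓ) (hk : k < ℓ) : nbrDegSum (walkEdges g i) (g k) =
      (if k < i then edgeDeg (walkEdges g i) (g (k + 1)) else 0) +
        (if 0 < k ∧ k ≤ i then edgeDeg (walkEdges g i) (g (k - 1)) else 0) :=
  sum_edgeInd_walkEdges_mul hg hi hk _

lemma edgeRate_edgeCorr_walkEdges_zero {m : ℕ} {g : ℕ → Fin n}
    (hg : Set.InjOn g (Set.Iio (m + 3))) (hd : 0 < d) :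
    edgeRate d (walkEdges g 0) (g 0) (g 1) = d / n ∧
      edgeCorr d (walkEdges g 0) (g 0) (g 1) = d / (d * n) := by
  have hd' : (d : ℝ) ≠ 0 := by positivity
  have a := edgeDeg_walkEdges hg (i := 0) (k := 0) (by omega) (by omega)
  have b := edgeDeg_walkEdges hg (i := 0) (k := 1) (by omega) (by omega)
  have s := nbrDegSum_walkEdges hg (i := 0) (k := 0) (by omega) (by omega)
  have t := nbrDegSum_walkEdges hg (i := 0) (k := 1) (by omega) (by omega)
  norm_num at a b s t
  rw [edgeCorr, lostPairs, edgeRate, degSum_walkEdges hg (by omega), a, b, s, t]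
  constructor
  · field_simp; ring
  · congr 1; norm_num; ring

lemma edgeRate_edgeCorr_walkEdges_one {m : ℕ} {g : ℕ → Fin n}
    (hg : Set.InjOn g (Set.Iio (m + 3))) (hd : 0 < d) :
    edgeRate d (walkEdges g 1) (g 1) (g 2) = (d - 1) / n ∧
      edgeCorr d (walkEdges g 1) (g 1) (g 2) = 2 * d / (d * n) := by
  have hd' : (d : ℝ) ≠ 0 := by positivity
  have a := edgeDeg_walkEdges hg (i := 1) (k := 1) (by omega) (by omega)
  have a' := edgeDeg_walkEdges hg (i := 1) (k := 0) (by omega) (by omega)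
  have b := edgeDeg_walkEdges hg (i := 1) (k := 2) (by omega) (by omega)
  have s := nbrDegSum_walkEdges hg (i := 1) (k := 1) (by omega) (by omega)
  have t := nbrDegSum_walkEdges hg (i := 1) (k := 2) (by omega) (by omega)
  norm_num [a'] at a b s t
  rw [edgeCorr, lostPairs, edgeRate, degSum_walkEdges hg (by omega), a, b, s, t]
  constructor
  · field_simp; ring
  · congr 1; norm_num; ring

lemma edgeRate_edgeCorr_walkEdges_add_two {m : ℕ} {g : ℕ → Fin n}
    (hg : Set.InjOn g (Set.Iio (m + 3))) (hd : 0 < d) {i : ℕ} (hi : i < m) :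
    edgeRate d (walkEdges g (i + 2)) (g (i + 2)) (g (i + 3)) = (d - 1) / n ∧
      edgeCorr d (walkEdges g (i + 2)) (g (i + 2)) (g (i + 3)) =
        (2 * d + 2 * i + 1) / (d * n) := by
  have hd' : (d : ℝ) ≠ 0 := by positivity
  have a := edgeDeg_walkEdges hg (i := i + 2) (k := i + 2) (by omega) (by omega)
  have a' := edgeDeg_walkEdges hg (i := i + 2) (k := i + 1) (by omega) (by omega)
  have b := edgeDeg_walkEdges hg (i := i + 2) (k := i + 3) (by omega) (by omega)
  have s := nbrDegSum_walkEdges hg (i := i + 2) (k := i + 2) (by omega) (by omega)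
  have t := nbrDegSum_walkEdges hg (i := i + 2) (k := i + 3) (by omega) (by omega)
  norm_num [a'] at a b s t
  rw [edgeCorr, lostPairs, edgeRate, degSum_walkEdges hg (by omega), a, b, s, t]
  constructor
  · field_simp; ring
  · congr 1; push_cast; ring

lemma edgeRate_edgeCorr_walkEdges_last {m : ℕ} {g : ℕ → Fin n}
    (hg : Set.InjOn g (Set.Iio (m + 3))) (h0 : g (m + 3) = g 0) :
    edgeRate d (walkEdges g (m + 2)) (g (m + 2)) (g (m + 3)) = (d - 1) ^ 2 / (d * n) ∧
      edgeCorr d (walkEdges g (m + 2)) (g (m + 2)) (g (m + 3)) =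
        (3 * d - 3 + 2 * m) / (d * n) := by
  have a := edgeDeg_walkEdges hg (i := m + 2) (k := m + 2) (by omega) (by omega)
  have a' := edgeDeg_walkEdges hg (i := m + 2) (k := m + 1) (by omega) (by omega)
  have b := edgeDeg_walkEdges hg (i := m + 2) (k := 0) (by omega) (by omega)
  have b' := edgeDeg_walkEdges hg (i := m + 2) (k := 1) (by omega) (by omega)
  have s := nbrDegSum_walkEdges hg (i := m + 2) (k := m + 2) (by omega) (by omega)
  have t := nbrDegSum_walkEdges hg (i := m + 2) (k := 0) (by omega) (by omega)
  norm_num [a', b'] at a b s t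
  rw [h0, edgeCorr, lostPairs, edgeRate, degSum_walkEdges hg (by omega), a, b, s, t]
  constructor
  · ring
  · congr 1; push_cast; ring

lemma walk_step {m : ℕ} {g : ℕ → Fin n} (hg : Set.InjOn g (Set.Iio (m + 3)))
    (h0 : g (m + 3) = g 0) {i : ℕ} (hi : i < m + 3) :
    g i ≠ g (i + 1) ∧ s(g i, g (i + 1)) ∉ walkEdges g i := by
  rcases Nat.lt_succ_iff_lt_or_eq.1 hi with h | rfl
  · refine ⟨fun h' => ?_, notMem_walkEdges hg (by omega)⟩
    have := hg (show i < m + 3 by omega) (show i + 1 < m + 3 by omega) h'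
    omega
  · rw [show m + 2 + 1 = m + 3 from rfl, h0]
    refine ⟨fun h' => ?_, ?_⟩
    · have := hg (show m + 2 < m + 3 by omega) (show 0 < m + 3 by omega) h'
      omega
    · simp only [walkEdges, Finset.mem_image, Finset.mem_range, not_exists, not_and]
      intro j hj h
      rcases Sym2.eq_iff.1 h with h | h
      · have := hg (show j < m + 3 by omega) (show m + 2 < m + 3 by omega) h.1
        omega
      · have h1 := hg (show j < m + 3 by omega) (show 0 < m + 3 by omega) h.1
        have h2 := hg (show j + 1 < m + 3 by omega) (show m + 2 < m + 3 by omega) h.2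
        omega

/-- Accumulation of relative errors of second order along a product. -/
lemma exists_prod_approx (c B : ℝ) (hc : 0 ≤ c) (hB : 0 ≤ B) (m : ℕ) :
    ∃ C : ℝ, 0 ≤ C ∧ ∀ (p : ℝ) (N r γ : ℕ → ℝ), 0 ≤ p → p ≤ 1 → (∀ i < m, |γ i| ≤ c * p) →
      (∀ i < m, |N (i + 1) - r i * (1 + γ i) * N i| ≤ B * p ^ 2 * |r i * N i|) →
      ∃ θ : ℝ, |θ| ≤ C * p ^ 2 ∧
        N m = (∏ i ∈ Finset.range m, r i) * (1 + ∑ i ∈ Finset.range m, γ i + θ) * N 0 := by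
  induction m with
  | zero => exact ⟨0, le_rfl, fun p N r γ _ _ _ _ => ⟨0, by simp, by simp⟩⟩
  | succ m ih =>
    obtain ⟨C, hC, h⟩ := ih
    refine ⟨C + c * (m * c) + c * C + B * (1 + m * c + C), by positivity,
      fun p N r γ hp0 hp1 hγ hN => ?_⟩
    obtain ⟨θ, hθ, e⟩ := h p N r γ hp0 hp1 (fun i hi => hγ i (by omega))
      (fun i hi => hN i (by omega))
    have hS : |∑ i ∈ Finset.range m, γ i| ≤ m * c * p := by
      refine (Finset.abs_sum_le_sum_abs _ _).trans ((Finset.sum_le_sum fun i hi =>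
        hγ i (by have := Finset.mem_range.1 hi; omega)).trans ?_)
      simp [mul_assoc]
    set S := ∑ i ∈ Finset.range m, γ i
    obtain ⟨η, hη, eη⟩ : ∃ η : ℝ, |η| ≤ B * p ^ 2 ∧ N (m + 1) = r m * (1 + γ m + η) * N m := by
      have h1 := hN m (by omega)
      rcases eq_or_ne (r m * N m) 0 with h0 | h0
      · refine ⟨0, by simpa using by positivity, ?_⟩
        rw [h0, abs_zero, mul_zero] at h1
        have := abs_nonpos_iff.1 h1
        linear_combination this
      · refine ⟨(N (m + 1) - r m * (1 + γ m) * N m) / (r m * N m), ?_, ?_⟩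
        · rw [abs_div, div_le_iff₀ (abs_pos.2 h0)]
          exact h1
        · have : (N (m + 1) - r m * (1 + γ m) * N m) / (r m * N m) * (r m * N m) =
            N (m + 1) - r m * (1 + γ m) * N m := div_mul_cancel₀ _ h0
          linear_combination -this
    refine ⟨θ + γ m * S + γ m * θ + η * (1 + S + θ), ?_, ?_⟩
    · have hpp : p ^ 2 ≤ p := by nlinarith
      have hγm := hγ m (by omega)
      have t1 : |γ m * S| ≤ c * (m * c) * p ^ 2 := by
        rw [abs_mul]
        exact (mul_le_mul hγm hS (abs_nonneg _) (by positivity)).trans_eq (by ring)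
      have t2 : |γ m * θ| ≤ c * C * p ^ 2 := by
        rw [abs_mul]
        refine (mul_le_mul (hγm.trans (mul_le_of_le_one_right hc hp1)) hθ (abs_nonneg _)
          hc).trans_eq (by ring)
      have t3 : |1 + S + θ| ≤ 1 + m * c + C := by
        refine (abs_add_three _ _ _).trans ?_
        have h1 : m * c * p ≤ m * c := mul_le_of_le_one_right (by positivity) hp1
        have h2 : C * p ^ 2 ≤ C := mul_le_of_le_one_right hC (by linarith)
        rw [abs_one]
        linarith
      have t4 : |η * (1 + S + θ)| ≤ B * (1 + m * c + C) * p ^ 2 := by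
        rw [abs_mul]
        exact (mul_le_mul hη t3 (abs_nonneg _) (by positivity)).trans_eq (by ring)
      rw [abs_le] at *
      constructor <;> linarith [hθ.1, hθ.2, t1.1, t1.2, t2.1, t2.2, t4.1, t4.2]
    · rw [eη, e, Finset.prod_range_succ, Finset.sum_range_succ]
      ring

/-- The number of regular graphs that contain a given cycle, up to a relative error of second
order. -/
lemma exists_numReg_cycle_approx (m : ℕ) : ∃ C : ℝ, 0 ≤ C ∧ ∀ n d : ℕ, 0 < n → 2 ≤ d →
    (4 * m + 34) * (d : ℝ) ≤ n → ∀ g : ℕ → Fin n, Set.InjOn g (Set.Iio (m + 3)) →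
    g (m + 3) = g 0 → ∃ θ : ℝ, |θ| ≤ C * (2 * d / n) ^ 2 ∧
      numReg d (walkEdges g (m + 3)) = ((d - 1) / n : ℝ) ^ (m + 3) *
        (1 + (3 * d + (∑ i ∈ Finset.range m, (2 * d + 2 * i + 1 : ℝ)) + (3 * d - 3 + 2 * m)) /
          (d * n) + θ) * numReg d (∅ : Finset (Sym2 (Fin n))) := by
  obtain ⟨C, hC, h⟩ := exists_prod_approx (2 * m + 3)
    (8 * ((2 * m + 14 + 9) * (2 * m + 14 + 30))) (by positivity) (by positivity) (m + 3)
  refine ⟨C, hC, fun n d hn hd hdn g hg h0 => ?_⟩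
  have hd0 : 0 < d := by omega
  have hd' : (2 : ℝ) ≤ d := by exact_mod_cast hd
  have hn' : (0 : ℝ) < n := by exact_mod_cast hn
  have hm : (0 : ℝ) ≤ m := m.cast_nonneg
  have hp : EdgeBound n d (2 * m + 14) (2 * d / n) :=
    edgeBound_of_le hd (by positivity) (by linarith)
  have hpn : 2 * d / n * n = (2 * d : ℝ) := div_mul_cancel₀ _ hn'.ne'
  have hp0 : (0 : ℝ) ≤ 2 * d / n := by positivity
  have hp1 : (2 * d / n : ℝ) ≤ 1 := by
    rw [div_le_one hn']
    nlinarith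
  have v0 := edgeRate_edgeCorr_walkEdges_zero hg hd0
  have v1 := edgeRate_edgeCorr_walkEdges_one hg hd0
  have v2 := fun i hi => edgeRate_edgeCorr_walkEdges_add_two hg hd0 (i := i) hi
  have v3 := edgeRate_edgeCorr_walkEdges_last (d := d) hg h0
  have small : ∀ t : ℝ, 0 ≤ t → t ≤ (2 * m + 3) * d →
      |t / (d * n)| ≤ (2 * m + 3) * (2 * d / n) := by
    intro t t0 t1
    rw [abs_of_nonneg (by positivity), div_le_iff₀ (by positivity)]
    have : (2 * m + 3) * (2 * d / n) * (d * n) = (2 * m + 3) * d * (2 * d : ℝ) := by field_simp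
    rw [this]
    exact t1.trans (le_mul_of_one_le_right (by positivity) (by linarith))
  have cases4 : ∀ i < m + 3, i = 0 ∨ i = 1 ∨ (∃ j < m, i = j + 2) ∨ i = m + 2 := by
    intro i hi
    by_cases h : 2 ≤ i ∧ i < m + 2
    · exact Or.inr (Or.inr (Or.inl ⟨i - 2, by omega, by omega⟩))
    · omega
  have hcorr : ∀ i < m + 3, |edgeCorr d (walkEdges g i) (g i) (g (i + 1))| ≤
      (2 * m + 3) * (2 * d / n) := by
    intro i hi
    rcases cases4 i hi with rfl | rfl | ⟨j, hj, rfl⟩ | rfl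
    · rw [v0.2]
      exact small _ (by positivity) (by nlinarith)
    · rw [v1.2]
      exact small _ (by positivity) (by nlinarith)
    · rw [(v2 j hj).2]
      have : (j : ℝ) + 1 ≤ m := by exact_mod_cast hj
      exact small _ (by positivity) (by nlinarith)
    · rw [v3.2]
      exact small _ (by linarith) (by nlinarith)
  have happrox : ∀ i < m + 3, |numReg d (walkEdges g (i + 1)) -
      edgeRate d (walkEdges g i) (g i) (g (i + 1)) *
        (1 + edgeCorr d (walkEdges g i) (g i) (g (i + 1))) * numReg d (walkEdges g i)| ≤
      8 * ((2 * m + 14 + 9) * (2 * m + 14 + 30)) * (2 * d / n) ^ 2 *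
        |edgeRate d (walkEdges g i) (g i) (g (i + 1)) * numReg d (walkEdges g i)| := by
    intro i hi
    obtain ⟨hne, hnot⟩ := walk_step hg h0 hi
    have hi' : (i : ℝ) ≤ m + 2 := by exact_mod_cast Nat.lt_succ_iff.1 hi
    have h1 := abs_numReg_insert_sub_edgeCorr_le hp hn hpn hp0 hp1 hd hne hnot
      (by rw [degSum_walkEdges hg hi]; linarith)
    rw [walkEdges_succ]
    refine h1.trans ?_
    have hN := numReg_nonneg (d := d) (walkEdges g i)
    have hr : 2 * d / n ≤ 8 * edgeRate d (walkEdges g i) (g i) (g (i + 1)) := by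
      rcases cases4 i hi with rfl | rfl | ⟨j, hj, rfl⟩ | rfl
      · rw [v0.1, ← mul_div_assoc]
        exact div_le_div_of_nonneg_right (by linarith) hn'.le
      · rw [v1.1, ← mul_div_assoc]
        exact div_le_div_of_nonneg_right (by linarith) hn'.le
      · rw [(v2 j hj).1, ← mul_div_assoc]
        exact div_le_div_of_nonneg_right (by linarith) hn'.le
      · rw [v3.1, ← mul_div_assoc, div_le_div_iff₀ hn' (by positivity)]
        nlinarith [mul_nonneg (show (0 : ℝ) ≤ d - 2 by linarith)
          (show (0 : ℝ) ≤ 3 * d - 2 by linarith)]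
    set r := edgeRate d (walkEdges g i) (g i) (g (i + 1))
    have hr0 : 0 ≤ r := by linarith
    rw [abs_of_nonneg (mul_nonneg hr0 hN)]
    have := mul_le_mul_of_nonneg_left hr (show 0 ≤ (2 * m + 14 + 9) * (2 * m + 14 + 30) *
      (2 * d / n : ℝ) ^ 2 * numReg d (walkEdges g i) by positivity)
    linarith
  obtain ⟨θ, hθ, e⟩ := h (2 * d / n) (fun i => numReg d (walkEdges g i))
    (fun i => edgeRate d (walkEdges g i) (g i) (g (i + 1)))
    (fun i => edgeCorr d (walkEdges g i) (g i) (g (i + 1))) hp0 hp1 hcorr happrox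
  refine ⟨θ, hθ, e.trans ?_⟩
  have hprod : ∏ i ∈ Finset.range (m + 3), edgeRate d (walkEdges g i) (g i) (g (i + 1)) =
      ((d - 1) / n : ℝ) ^ (m + 3) := by
    rw [Finset.prod_range_succ, Finset.prod_range_succ', Finset.prod_range_succ', v3.1, v0.1,
      v1.1, Finset.prod_congr rfl fun i hi => (v2 i (Finset.mem_range.1 hi)).1,
      Finset.prod_const, Finset.card_range, pow_add, div_pow _ _ 3]
    field_simp
  have hsum : ∑ i ∈ Finset.range (m + 3), edgeCorr d (walkEdges g i) (g i) (g (i + 1)) =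
      (3 * d + (∑ i ∈ Finset.range m, (2 * d + 2 * i + 1 : ℝ)) + (3 * d - 3 + 2 * m)) /
        (d * n) := by
    rw [Finset.sum_range_succ, Finset.sum_range_succ', Finset.sum_range_succ', v3.2, v0.2,
      v1.2, Finset.sum_congr rfl fun i hi => (v2 i (Finset.mem_range.1 hi)).2,
      ← Finset.sum_div]
    ring
  rw [hprod, hsum]
  rfl

lemma deg_eq_iff (G : SimpleGraph (Fin n)) (x : Fin n) :
    deg G x = d ↔ ∑ y, adjInd G x y = d := by
  have h : ∑ y, adjInd G x y = deg G x := by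
    simp only [adjInd, Finset.sum_boole, deg]
    rw [← Set.ncard_coe_finset]
    congr 2
    ext y
    simp
  rw [h, Nat.cast_inj]

lemma cycGraph_le_iff {m : ℕ} (f : ZMod (m + 3) ↪ Fin n) (G : SimpleGraph (Fin n)) :
    cycGraph f ≤ G ↔ ∀ e ∈ walkEdges (fun j => f j) (m + 3), e ∈ G.edgeSet := by
  simp only [walkEdges, Finset.mem_image, Finset.mem_range, forall_exists_index, and_imp,
    forall_apply_eq_imp_iff₂, SimpleGraph.mem_edgeSet]
  constructor
  · intro h j hj
    apply h
    simp only [cycGraph, SimpleGraph.fromEdgeSet_adj, Set.mem_ofPred_eq]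
    refine ⟨⟨j, by simp⟩, fun he => ?_⟩
    have : Fact (1 < m + 3) := ⟨by omega⟩
    have h2 := f.injective he
    rw [Nat.cast_add, Nat.cast_one, left_eq_add] at h2
    exact one_ne_zero h2
  · intro h a b hab
    simp only [cycGraph, SimpleGraph.fromEdgeSet_adj, Set.mem_ofPred_eq] at hab
    obtain ⟨⟨i, hi⟩, -⟩ := hab
    have h1 := h i.val i.val_lt
    rw [← SimpleGraph.mem_edgeSet, hi, SimpleGraph.mem_edgeSet]
    simpa using h1

lemma natCast_injOn {m : ℕ} (f : ZMod m ↪ Fin n) :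
    Set.InjOn (fun j : ℕ => f j) (Set.Iio m) := by
  intro j hj k hk h
  have := (ZMod.natCast_eq_natCast_iff' j k m).1 (f.injective h)
  rwa [Nat.mod_eq_of_lt hj, Nat.mod_eq_of_lt hk] at this

lemma prob_cycGraph {m : ℕ} (f : ZMod (m + 3) ↪ Fin n) :
    prob (fun G : SimpleGraph (Fin n) => ∀ i, deg G i = d) (fun G => cycGraph f ≤ G) =
      numReg d (walkEdges (fun j => f j) (m + 3)) / numReg d (∅ : Finset (Sym2 (Fin n))) := by
  rw [prob, Nat.subtype_card (regGraphs d (walkEdges (fun j => f j) (m + 3))),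
    Nat.subtype_card (regGraphs d ∅)]
  · rfl
  · intro G
    simp [regGraphs, deg_eq_iff]
  · intro G
    simp [regGraphs, deg_eq_iff, cycGraph_le_iff]

end Counting

/-- The probability that a fixed `ℓ`-cycle is contained in the random `d`-regular graph. -/
theorem stmt9 (ℓ : ℕ) (hℓ : 3 ≤ ℓ) :
    ∃ C δ : ℝ, 0 < C ∧ 0 < δ ∧
      ∀ n d : ℕ, 0 < n → 2 ≤ d → (d : ℝ) ≤ δ * n → Even (d * n) →
      ∀ f : ZMod ℓ ↪ Fin n,
      ∀ φsum : ℝ,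
      φsum = (-(d : ℝ)) + (-2 * (d : ℝ))
          + (∑ i ∈ Finset.Icc 3 (ℓ - 1), (-2 * (d : ℝ) - 2 * ((i : ℝ) - 3) - 1))
          + (-3 * (d : ℝ) + 3 - 2 * ((ℓ : ℝ) - 3)) →
      ∃ θ : ℝ, |θ| ≤ C * (d : ℝ) ^ 2 / (n : ℝ) ^ 2 ∧
        prob (fun G : SimpleGraph (Fin n) => ∀ i, deg G i = d)
            (fun G => cycGraph f ≤ G)
          = (((d : ℝ) - 1) / n) ^ ℓ * (1 - φsum / ((d : ℝ) * n) + θ) := by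
  obtain ⟨m, rfl⟩ := Nat.exists_eq_add_of_le' hℓ
  obtain ⟨C, hC, h⟩ := exists_numReg_cycle_approx m
  refine ⟨4 * C + 1, 1 / (4 * m + 34), by positivity, by positivity,
    fun n d hn hd hδ he f φsum hφ => ?_⟩
  have hn' : (0 : ℝ) < n := by exact_mod_cast hn
  have hd' : (2 : ℝ) ≤ d := by exact_mod_cast hd
  have hdn : (4 * m + 34) * (d : ℝ) ≤ n := by
    rw [one_div, ← div_eq_inv_mul, le_div_iff₀ (by positivity)] at hδ
    linarith
  have hlt : d < n := by
    have : (d : ℝ) < n := by nlinarith [(m.cast_nonneg : (0 : ℝ) ≤ m)]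
    exact_mod_cast this
  obtain ⟨θ, hθ, e⟩ := h n d hn hd hdn (fun j => f j) (natCast_injOn f)
    (by simp only [ZMod.natCast_self, Nat.cast_zero])
  have hpos := numReg_empty_pos hlt he
  refine ⟨θ, hθ.trans ?_, ?_⟩
  · have : C * (2 * d / n) ^ 2 = 4 * C * d ^ 2 / (n : ℝ) ^ 2 := by ring
    rw [this]
    gcongr
    linarith
  · have hsum : ∑ i ∈ Finset.Icc 3 (m + 3 - 1), (-2 * (d : ℝ) - 2 * ((i : ℝ) - 3) - 1) =
        -∑ i ∈ Finset.range m, (2 * d + 2 * i + 1 : ℝ) := by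
      have h1 : Finset.Icc 3 (m + 3 - 1) = Finset.Ico (0 + 3) (m + 3) := by
        ext i
        simp
        omega
      rw [h1, ← Finset.sum_Ico_add', ← Finset.range_eq_Ico, ← Finset.sum_neg_distrib]
      refine Finset.sum_congr rfl fun i _ => ?_
      push_cast
      ring
    rw [prob_cycGraph, e, mul_div_cancel_right₀ _ hpos.ne', hφ, hsum]
    push_cast
    ring
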